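/- arXiv:math/0511066 — 8 statements merged into one kernel-verified Lean document; each statement's English description precedes it below -/
import Mathlib

section
/- Let μ ≥ 0 and let S : ℤ³ → ℂ satisfy S(k,m,n) = 0 whenever kmn = 0, S(k,m,n) = S(k,n,m), S(k,m,n) = S(m,n,k), S(k,m,n) = conj(S(−k,−m,−n)), and |S(k,m,n)| ≤ C·min{|k|^μ, |m|^μ, |n|^μ} for all k,m,n ∈ ℤ. Let s > μ + 3/2 and let I be an open time interval containing 0. If u, v ∈ C(I; Ḣ^s(𝕋)) ∩ C¹(I; Ḣ^{s−1}(𝕋)) both solve u_t + a(u,u)_x = 0 on I (in Fourier coefficients: ∂_t û(k,t) + ik Σ_{n∈ℤ} S(−k,k−n,n) û(k−n,t) û(n,t) = 0) and u(·,0) = v(·,0), then u = v on I. -/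
open scoped BigOperators
open Filter

/-- The homogeneous Sobolev norm of order `s` of a Fourier coefficient sequence. -/
noncomputable def hnorm (s : ℝ) (u : ℤ → ℂ) : ℝ :=
  (∑' k : ℤ, |(k : ℝ)| ^ (2 * s) * ‖u k‖ ^ 2) ^ ((1 : ℝ) / 2)

/-- Membership in the homogeneous Sobolev space `Ḣ^s(𝕋)`. -/
def InHs (s : ℝ) (u : ℤ → ℂ) : Prop :=
  u 0 = 0 ∧ (∀ k : ℤ, u (-k) = starRingEnd ℂ (u k)) ∧
    Summable fun k : ℤ => |(k : ℝ)| ^ (2 * s) * ‖u k‖ ^ 2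

/-- The Fourier coefficients of the bilinear form `a(u,v)` determined by the kernel `S`. -/
noncomputable def aHat (S : ℤ → ℤ → ℤ → ℂ) (u v : ℤ → ℂ) (k : ℤ) : ℂ :=
  ∑' n : ℤ, S (-k) (k - n) n * u (k - n) * v n

/-- Continuity of `t ↦ u(·,t)` on `I` with values in `Ḣ^s`. -/
def HsContOn (s : ℝ) (u : ℝ → ℤ → ℂ) (I : Set ℝ) : Prop :=
  ∀ t₀ ∈ I, Tendsto (fun t => hnorm s fun k => u t k - u t₀ k) (nhdsWithin t₀ I) (nhds 0)

/-- `u` is a solution of `u_t + a(u,u)_x = 0` on the time interval `I`,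
belonging to `C(I; Ḣ^s) ∩ C¹(I; Ḣ^{s-1})`. -/
def IsSolution (S : ℤ → ℤ → ℤ → ℂ) (s : ℝ) (I : Set ℝ) (u : ℝ → ℤ → ℂ) : Prop :=
  (∀ t ∈ I, InHs s (u t)) ∧ HsContOn s u I ∧
    (∀ t ∈ I, ∀ k : ℤ, HasDerivAt (fun τ => u τ k)
      (-(Complex.I * (k : ℂ) * aHat S (u t) (u t) k)) t) ∧
    (∀ t ∈ I, InHs (s - 1) fun k => -(Complex.I * (k : ℂ) * aHat S (u t) (u t) k)) ∧
    HsContOn (s - 1) (fun t k => -(Complex.I * (k : ℂ) * aHat S (u t) (u t) k)) I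

noncomputable abbrev L2 := lp (fun _ : ℤ => ℂ) 2

lemma hs_mono {r' r : ℝ} (h0 : 0 ≤ r') (h : r' ≤ r) {f : ℤ → ℂ} (f0 : f 0 = 0)
    (hf : Summable fun k : ℤ => |(k : ℝ)| ^ (2 * r) * ‖f k‖ ^ 2) :
    (Summable fun k : ℤ => |(k : ℝ)| ^ (2 * r') * ‖f k‖ ^ 2) ∧
    ∑' k : ℤ, |(k : ℝ)| ^ (2 * r') * ‖f k‖ ^ 2 ≤ ∑' k : ℤ, |(k : ℝ)| ^ (2 * r) * ‖f k‖ ^ 2 := by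
  have key : ∀ k : ℤ, |(k : ℝ)| ^ (2 * r') * ‖f k‖ ^ 2 ≤ |(k : ℝ)| ^ (2 * r) * ‖f k‖ ^ 2 := by
    intro k
    rcases eq_or_ne k 0 with rfl | hk
    · simp [f0]
    · have : (1 : ℝ) ≤ |(k : ℝ)| := by exact_mod_cast Int.one_le_abs hk
      gcongr
  have h1 := Summable.of_nonneg_of_le (fun k => by positivity) key hf
  exact ⟨h1, h1.tsum_le_tsum key hf⟩

noncomputable def wt (r : ℝ) (f : ℤ → ℂ) : ℤ → ℂ := fun k => ((|(k : ℝ)| ^ r : ℝ) : ℂ) * f k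

lemma wt_norm_sq (r : ℝ) (f : ℤ → ℂ) (k : ℤ) :
    ‖wt r f k‖ ^ 2 = |(k : ℝ)| ^ (2 * r) * ‖f k‖ ^ 2 := by
  unfold wt
  rw [norm_mul, mul_pow, Complex.norm_real, Real.norm_eq_abs, sq_abs, mul_comm 2 r,
    Real.rpow_mul (abs_nonneg _)]
  norm_num

open Classical in
noncomputable def toL2 (r : ℝ) (f : ℤ → ℂ) : L2 :=
  if h : Memℓp (wt r f) 2 then ⟨wt r f, h⟩ else 0

lemma toL2_coe {r : ℝ} {f : ℤ → ℂ}
    (hf : Summable fun k : ℤ => |(k : ℝ)| ^ (2 * r) * ‖f k‖ ^ 2) (k : ℤ) :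
    toL2 r f k = wt r f k := by
  have h : Memℓp (wt r f) 2 := by
    apply memℓp_gen
    simpa [wt_norm_sq] using hf
  unfold toL2
  rw [dif_pos h]

lemma l2_norm_sq (x : L2) : ‖x‖ ^ 2 = ∑' k, ‖x k‖ ^ 2 := by
  have := lp.norm_rpow_eq_tsum (p := 2) (by norm_num) x
  simpa using this

lemma l2_summable (x : L2) : Summable fun k => ‖x k‖ ^ 2 := by
  have := (lp.memℓp x).summable (by norm_num)
  simpa using this

lemma toL2_norm_sq {r : ℝ} {f : ℤ → ℂ}
    (hf : Summable fun k : ℤ => |(k : ℝ)| ^ (2 * r) * ‖f k‖ ^ 2) :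
    ‖toL2 r f‖ ^ 2 = ∑' k : ℤ, |(k : ℝ)| ^ (2 * r) * ‖f k‖ ^ 2 := by
  rw [l2_norm_sq]
  simp_rw [toL2_coe hf, wt_norm_sq]

lemma sub_summable {r : ℝ} {f g : ℤ → ℂ}
    (hf : Summable fun k : ℤ => |(k : ℝ)| ^ (2 * r) * ‖f k‖ ^ 2)
    (hg : Summable fun k : ℤ => |(k : ℝ)| ^ (2 * r) * ‖g k‖ ^ 2) :
    Summable fun k : ℤ => |(k : ℝ)| ^ (2 * r) * ‖f k - g k‖ ^ 2 := by
  refine Summable.of_nonneg_of_le (fun k => by positivity) (fun k => ?_)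
    ((hf.add hg).mul_left 2)
  have h1 := norm_sub_le (f k) (g k)
  have h2 : ‖f k - g k‖ ^ 2 ≤ 2 * (‖f k‖ ^ 2 + ‖g k‖ ^ 2) := by
    nlinarith [sq_nonneg (‖f k‖ - ‖g k‖), norm_nonneg (f k - g k)]
  calc _ ≤ |(k : ℝ)| ^ (2 * r) * (2 * (‖f k‖ ^ 2 + ‖g k‖ ^ 2)) := by gcongr
    _ = _ := by ring

lemma cont_toL2 {r' r : ℝ} (h0 : 0 ≤ r') (h : r' ≤ r) {u : ℝ → ℤ → ℂ} {I : Set ℝ}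
    (hu : ∀ t ∈ I, InHs r (u t)) (hc : HsContOn r u I) :
    ContinuousOn (fun t => toL2 r' (u t)) I := by
  intro t₀ ht₀
  rw [ContinuousWithinAt, tendsto_iff_norm_sub_tendsto_zero]
  refine squeeze_zero' (Eventually.of_forall fun t => norm_nonneg _) ?_ (hc t₀ ht₀)
  filter_upwards [self_mem_nhdsWithin] with t ht
  have a1 := (hu t ht).2.2
  have a2 := (hu t₀ ht₀).2.2
  have b1 := (hs_mono h0 h (hu t ht).1 a1).1
  have b2 := (hs_mono h0 h (hu t₀ ht₀).1 a2).1
  have a3 := sub_summable a1 a2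
  have b3 := sub_summable b1 b2
  have e : toL2 r' (u t) - toL2 r' (u t₀) = toL2 r' (fun k => u t k - u t₀ k) := by
    ext k
    have : (toL2 r' (u t) - toL2 r' (u t₀)) k = toL2 r' (u t) k - toL2 r' (u t₀) k := rfl
    rw [this, toL2_coe b1, toL2_coe b2, toL2_coe b3]
    simp only [wt]; ring
  rw [e]
  have h3 := (hs_mono h0 h (f := fun k => u t k - u t₀ k)
    (by simp [(hu t ht).1, (hu t₀ ht₀).1]) a3).2
  rw [← toL2_norm_sq b3] at h3
  unfold hnorm
  rw [← Real.sqrt_eq_rpow]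
  exact Real.le_sqrt_of_sq_le h3

lemma young {P X Y : ℤ → ℝ} (P0 : ∀ k, 0 ≤ P k) (hP : Summable P)
    (X0 : ∀ k, 0 ≤ X k) (hX : Summable fun k => X k ^ 2)
    (Y0 : ∀ k, 0 ≤ Y k) (hY : Summable fun k => Y k ^ 2) :
    (Summable fun q : ℤ × ℤ => P (q.1 - q.2) * X q.1 * Y q.2) ∧
    ∑' q : ℤ × ℤ, P (q.1 - q.2) * X q.1 * Y q.2 ≤
      (∑' k, P k) * ((∑' k, X k ^ 2) + ∑' k, Y k ^ 2) / 2 := by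
  have e1 : Summable fun q : ℤ × ℤ => P q.1 * X q.2 ^ 2 :=
    hP.mul_of_nonneg hX P0 (fun k => sq_nonneg _)
  have e2 : Summable fun q : ℤ × ℤ => P q.1 * Y q.2 ^ 2 :=
    hP.mul_of_nonneg hY P0 (fun k => sq_nonneg _)
  let σ : ℤ × ℤ ≃ ℤ × ℤ :=
    ⟨fun q => (q.1 - q.2, q.1), fun q => (q.2, q.2 - q.1), fun q => by simp, fun q => by simp⟩
  let τ : ℤ × ℤ ≃ ℤ × ℤ :=
    ⟨fun q => (q.1 - q.2, q.2), fun q => (q.1 + q.2, q.2), fun q => by simp, fun q => by simp⟩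
  have f1 : HasSum (fun q : ℤ × ℤ => P (q.1 - q.2) * X q.1 ^ 2) ((∑' k, P k) * ∑' k, X k ^ 2) := by
    rw [hP.tsum_mul_tsum hX e1]
    exact (σ.hasSum_iff (f := fun q : ℤ × ℤ => P q.1 * X q.2 ^ 2)).2 e1.hasSum
  have f2 : HasSum (fun q : ℤ × ℤ => P (q.1 - q.2) * Y q.2 ^ 2) ((∑' k, P k) * ∑' k, Y k ^ 2) := by
    rw [hP.tsum_mul_tsum hY e2]
    exact (τ.hasSum_iff (f := fun q : ℤ × ℤ => P q.1 * Y q.2 ^ 2)).2 e2.hasSum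
  have f3 := (f1.add f2).mul_right (1 / 2 : ℝ)
  have key : ∀ q : ℤ × ℤ, P (q.1 - q.2) * X q.1 * Y q.2 ≤
      (P (q.1 - q.2) * X q.1 ^ 2 + P (q.1 - q.2) * Y q.2 ^ 2) * (1 / 2) := by
    intro q
    nlinarith [mul_nonneg (P0 (q.1 - q.2)) (sq_nonneg (X q.1 - Y q.2))]
  have hs := Summable.of_nonneg_of_le
    (fun q => mul_nonneg (mul_nonneg (P0 (q.1 - q.2)) (X0 q.1)) (Y0 q.2)) key f3.summable
  refine ⟨hs, (hs.tsum_le_tsum key f3.summable).trans (le_of_eq ?_)⟩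
  rw [f3.tsum_eq]; ring

lemma wiener {μ s : ℝ} (hμ : 0 ≤ μ) (hs : μ + 3 / 2 < s) {f : ℤ → ℂ} (f0 : f 0 = 0)
    (hf : Summable fun k : ℤ => |(k : ℝ)| ^ (2 * s) * ‖f k‖ ^ 2) :
    (Summable fun k : ℤ => |(k : ℝ)| ^ (1 + μ) * ‖f k‖) ∧
    ∑' k : ℤ, |(k : ℝ)| ^ (1 + μ) * ‖f k‖ ≤
      (∑' k : ℤ, |(k : ℝ)| ^ (-(2 * (s - 1 - μ)))) + ‖toL2 s f‖ ^ 2 := by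
  rw [toL2_norm_sq hf]
  have h1 := Real.summable_abs_int_rpow (b := 2 * (s - 1 - μ)) (by linarith)
  have key : ∀ k : ℤ, |(k : ℝ)| ^ (1 + μ) * ‖f k‖ ≤
      |(k : ℝ)| ^ (-(2 * (s - 1 - μ))) + |(k : ℝ)| ^ (2 * s) * ‖f k‖ ^ 2 := by
    intro k
    rcases eq_or_ne k 0 with rfl | hk
    · simp only [f0]; simp; positivity
    · have hk : (0 : ℝ) < |(k : ℝ)| := by positivity
      set x := |(k : ℝ)|
      have e1 : x ^ (-(2 * (s - 1 - μ))) = (x ^ (-(s - 1 - μ))) ^ 2 := by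
        rw [← Real.rpow_natCast, ← Real.rpow_mul hk.le]; congr 1; push_cast; ring
      have e2 : x ^ (2 * s) = (x ^ s) ^ 2 := by
        rw [← Real.rpow_natCast, ← Real.rpow_mul hk.le]; congr 1; push_cast; ring
      have e3 : x ^ (1 + μ) = x ^ (-(s - 1 - μ)) * x ^ s := by
        rw [← Real.rpow_add hk]; congr 1; ring
      rw [e1, e2, e3]
      have : 0 ≤ x ^ (-(s - 1 - μ)) * (x ^ s * ‖f k‖) := by positivity
      nlinarith [sq_nonneg (x ^ (-(s - 1 - μ)) - x ^ s * ‖f k‖)]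
  have hh := Summable.of_nonneg_of_le (fun k => by positivity) key (h1.add hf)
  refine ⟨hh, ?_⟩
  rw [← h1.tsum_add hf]
  exact hh.tsum_le_tsum key (h1.add hf)

lemma aHat_summable {μ : ℝ} {S : ℤ → ℤ → ℤ → ℂ} {C : ℝ} (hC : 0 < C)
    (hSbound : ∀ k m n : ℤ, ‖S k m n‖ ≤
      C * min (|(k : ℝ)| ^ μ) (min (|(m : ℝ)| ^ μ) (|(n : ℝ)| ^ μ)))
    {f g : ℤ → ℂ} (hf : Summable fun k => ‖f k‖ ^ 2) (hg : Summable fun k => ‖g k‖ ^ 2) (k : ℤ) :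
    Summable fun n : ℤ => S (-k) (k - n) n * f (k - n) * g n := by
  have hf' : Summable fun n => ‖f (k - n)‖ ^ 2 :=
    ((Equiv.subLeft k).summable_iff (f := fun n => ‖f n‖ ^ 2)).2 hf
  refine Summable.of_norm_bounded ((hf'.add hg).mul_left (C * |(k : ℝ)| ^ μ)) fun n => ?_
  have h1 : ‖S (-k) (k - n) n‖ ≤ C * |(k : ℝ)| ^ μ := by
    refine (hSbound _ _ _).trans ?_
    gcongr
    refine (min_le_left _ _).trans ?_
    simp
  rw [norm_mul, norm_mul, mul_assoc]
  have h2 : ‖f (k - n)‖ * ‖g n‖ ≤ ‖f (k - n)‖ ^ 2 + ‖g n‖ ^ 2 := by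
    nlinarith [sq_nonneg (‖f (k - n)‖ - ‖g n‖), norm_nonneg (f (k - n)), norm_nonneg (g n),
      mul_nonneg (norm_nonneg (f (k - n))) (norm_nonneg (g n))]
  gcongr

lemma aHat_symm {S : ℤ → ℤ → ℤ → ℂ} (hSsym : ∀ k m n : ℤ, S k m n = S k n m)
    (f g : ℤ → ℂ) (k : ℤ) : aHat S f g k = aHat S g f k := by
  unfold aHat
  rw [← (Equiv.subLeft k).tsum_eq]
  refine tsum_congr fun n => ?_
  simp only [Equiv.subLeft_apply, sub_sub_cancel]
  rw [hSsym]; ring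

lemma aHat_diff {μ : ℝ} {S : ℤ → ℤ → ℤ → ℂ} {C : ℝ} (hC : 0 < C)
    (hSsym : ∀ k m n : ℤ, S k m n = S k n m)
    (hSbound : ∀ k m n : ℤ, ‖S k m n‖ ≤
      C * min (|(k : ℝ)| ^ μ) (min (|(m : ℝ)| ^ μ) (|(n : ℝ)| ^ μ)))
    {f g : ℤ → ℂ} (hf : Summable fun k => ‖f k‖ ^ 2) (hg : Summable fun k => ‖g k‖ ^ 2) (k : ℤ) :
    aHat S f f k - aHat S g g k = aHat S (fun k => f k + g k) (fun k => f k - g k) k := by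
  have h := fun {f g : ℤ → ℂ} (hf : Summable fun k => ‖f k‖ ^ 2)
    (hg : Summable fun k => ‖g k‖ ^ 2) => (aHat_summable hC hSbound hf hg k).hasSum
  have h1 := (((h hf hf).sub (h hf hg)).add (h hg hf)).sub (h hg hg)
  have e : aHat S f g k = aHat S g f k := aHat_symm hSsym f g k
  have : aHat S f f k - aHat S g g k
      = aHat S f f k - aHat S f g k + aHat S g f k - aHat S g g k := by rw [e]; ring
  rw [this]
  unfold aHat
  rw [← h1.tsum_eq]
  refine tsum_congr fun n => ?_
  ring

lemma key_estimate {μ : ℝ} (hμ : 0 ≤ μ) {S : ℤ → ℤ → ℤ → ℂ}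
    (hSsym : ∀ k m n : ℤ, S k m n = S k n m)
    (hScyc : ∀ k m n : ℤ, S k m n = S m n k)
    {C : ℝ} (hC : 0 < C)
    (hSbound : ∀ k m n : ℤ, ‖S k m n‖ ≤
      C * min (|(k : ℝ)| ^ μ) (min (|(m : ℝ)| ^ μ) (|(n : ℝ)| ^ μ)))
    {p w : ℤ → ℂ} (p0 : p 0 = 0)
    (hp : Summable fun k : ℤ => |(k : ℝ)| ^ (1 + μ) * ‖p k‖)
    (wr : ∀ k : ℤ, w (-k) = starRingEnd ℂ (w k))
    (hw : Summable fun k : ℤ => ‖w k‖ ^ 2)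
    (hw1 : Summable fun k : ℤ => (|(k : ℝ)| * ‖w k‖) ^ 2) :
    (Summable fun k : ℤ => -(Complex.I * (k : ℂ) * aHat S p w k) * starRingEnd ℂ (w k)) ∧
    ‖∑' k : ℤ, -(Complex.I * (k : ℂ) * aHat S p w k) * starRingEnd ℂ (w k)‖ ≤
      C * (∑' k : ℤ, |(k : ℝ)| ^ (1 + μ) * ‖p k‖) * (∑' k : ℤ, ‖w k‖ ^ 2) := by
  have hpμ : Summable fun k : ℤ => |(k : ℝ)| ^ μ * ‖p k‖ := by
    refine Summable.of_nonneg_of_le (fun k => by positivity) (fun k => ?_) hp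
    rcases eq_or_ne k 0 with rfl | hk
    · simp [p0]
    · have : (1 : ℝ) ≤ |(k : ℝ)| := by exact_mod_cast Int.one_le_abs hk
      gcongr
      linarith
  have hSm : ∀ k n : ℤ, ‖S (-k) (k - n) n‖ ≤ C * |((k - n : ℤ) : ℝ)| ^ μ := by
    intro k n
    refine (hSbound _ _ _).trans ?_
    gcongr
    exact (min_le_right _ _).trans (min_le_left _ _)
  let F : ℤ × ℤ → ℂ := fun q =>
    (q.1 : ℂ) * S (-q.1) (q.1 - q.2) q.2 * p (q.1 - q.2) * starRingEnd ℂ (w q.1) * w q.2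
  have hF : Summable F := by
    have y := (young (P := fun k : ℤ => |(k : ℝ)| ^ μ * ‖p k‖) (X := fun k : ℤ => |(k : ℝ)| * ‖w k‖)
      (Y := fun k => ‖w k‖) (fun k => by positivity) hpμ (fun k => by positivity) hw1
      (fun k => by positivity) hw).1
    refine Summable.of_norm_bounded (y.mul_left C) fun q => ?_
    simp only [F, norm_mul, RCLike.norm_conj, Complex.norm_intCast]
    calc _ ≤ |(q.1 : ℝ)| * (C * |((q.1 - q.2 : ℤ) : ℝ)| ^ μ) * ‖p (q.1 - q.2)‖ * ‖w q.1‖ * ‖w q.2‖ := by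
          gcongr; exact hSm _ _
      _ = _ := by ring
  let σ : ℤ × ℤ ≃ ℤ × ℤ :=
    ⟨fun q => (-q.2, -q.1), fun q => (-q.2, -q.1), fun q => by simp, fun q => by simp⟩
  have hFσ : HasSum (fun q => F (σ q)) (∑' q, F q) := (σ.hasSum_iff (f := F)).2 hF.hasSum
  have h2 : ‖(∑' q, F q) + ∑' q, F q‖ ≤
      C * (∑' k : ℤ, |(k : ℝ)| ^ (1 + μ) * ‖p k‖) * (∑' k : ℤ, ‖w k‖ ^ 2) := by
    have y := young (P := fun k : ℤ => |(k : ℝ)| ^ (1 + μ) * ‖p k‖) (X := fun k : ℤ => ‖w k‖)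
      (Y := fun k => ‖w k‖) (fun k => by positivity) hp (fun k => by positivity) hw
      (fun k => by positivity) hw
    have hs := hF.hasSum.add hFσ
    rw [← hs.tsum_eq]
    refine (tsum_of_norm_bounded (y.1.mul_left C).hasSum fun q => ?_).trans ?_
    · have e : F q + F (σ q) = ((q.1 - q.2 : ℤ) : ℂ) * S (-q.1) (q.1 - q.2) q.2 * p (q.1 - q.2) *
          starRingEnd ℂ (w q.1) * w q.2 := by
        simp only [F, σ, Equiv.coe_fn_mk, wr, Complex.conj_conj, neg_neg]
        have a1 : -q.2 - -q.1 = q.1 - q.2 := by ring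
        rw [a1, hSsym q.2, hScyc q.2]
        push_cast
        ring
      rw [e]
      simp only [norm_mul, RCLike.norm_conj, Complex.norm_intCast]
      rcases eq_or_ne (q.1 - q.2) 0 with h | h
      · simp [h, p0]
      have hpos : (0 : ℝ) < |((q.1 - q.2 : ℤ) : ℝ)| := by positivity
      rw [Real.rpow_add hpos, Real.rpow_one]
      calc _ ≤ |((q.1 - q.2 : ℤ) : ℝ)| * (C * |((q.1 - q.2 : ℤ) : ℝ)| ^ μ) * ‖p (q.1 - q.2)‖ *
              ‖w q.1‖ * ‖w q.2‖ := by
            gcongr; exact hSm _ _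
        _ = _ := by ring
    · rw [tsum_mul_left, mul_assoc]
      refine mul_le_mul_of_nonneg_left (y.2.trans (le_of_eq ?_)) hC.le
      ring
  have hrow : ∀ k : ℤ, -(Complex.I * (k : ℂ) * aHat S p w k) * starRingEnd ℂ (w k)
      = -Complex.I * ∑' n, F (k, n) := by
    intro k
    simp only [F, aHat]
    have : ∀ n : ℤ, (k : ℂ) * S (-k) (k - n) n * p (k - n) * starRingEnd ℂ (w k) * w n
        = ((k : ℂ) * starRingEnd ℂ (w k)) * (S (-k) (k - n) n * p (k - n) * w n) := by
      intro n; ring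
    simp_rw [this, tsum_mul_left]
    ring
  simp_rw [hrow]
  refine ⟨(hF.prod).mul_left _, ?_⟩
  rw [tsum_mul_left, ← hF.tsum_prod, norm_mul, norm_neg, Complex.norm_I, one_mul]
  refine le_trans ?_ h2
  rw [← two_mul, norm_mul]
  simp
  linarith [norm_nonneg (∑' q, F q)]

lemma gronwall_zero {α β K : ℝ} {f f' : ℝ → ℝ} (h0 : (0 : ℝ) ∈ Set.Ioo α β)
    (hf : ∀ t ∈ Set.Ioo α β, HasDerivAt f (f' t) t)
    (hK : ∀ t ∈ Set.Ioo α β, |f' t| ≤ K * |f t|) (hf0 : f 0 = 0) :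
    ∀ t ∈ Set.Ioo α β, f t = 0 := by
  have := ODE_solution_unique_of_mem_Ioo (v := fun t x => f' t / f t * x)
    (s := fun _ => Set.univ) (K := K.toNNReal) (f := f) (g := fun _ => 0) (t₀ := 0)
    (a := α) (b := β) ?_ h0 ?_ ?_ hf0
  · exact this
  · intro t ht
    apply LipschitzWith.lipschitzOnWith
    apply LipschitzWith.of_dist_le_mul
    intro x y
    rw [Real.dist_eq, Real.dist_eq, ← mul_sub, abs_mul]
    gcongr
    rcases eq_or_ne (f t) 0 with h | h
    · simp [h]
    · rw [abs_div, div_le_iff₀ (abs_pos.2 h)]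
      exact (hK t ht).trans (by gcongr; exact Real.le_coe_toNNReal K)
  · intro t ht
    refine ⟨?_, trivial⟩
    suffices h : f' t / f t * f t = f' t by
      change HasDerivAt f (f' t / f t * f t) t
      rw [h]; exact hf t ht
    rcases eq_or_ne (f t) 0 with h | h
    · have := hK t ht
      rw [h] at this
      simp at this
      simp [h, this]
    · field_simp
  · intro t ht
    exact ⟨by simpa using hasDerivAt_const t (0 : ℝ), trivial⟩


/-- Uniqueness of `C(I;Ḣ^s) ∩ C¹(I;Ḣ^{s−1})` solutions with the same initial data. -/
theorem uniqueness_of_solutions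
    (μ : ℝ) (hμ : 0 ≤ μ) (S : ℤ → ℤ → ℤ → ℂ)
    (hS0 : ∀ k m n : ℤ, k * m * n = 0 → S k m n = 0)
    (hSsym : ∀ k m n : ℤ, S k m n = S k n m)
    (hScyc : ∀ k m n : ℤ, S k m n = S m n k)
    (hSreal : ∀ k m n : ℤ, S k m n = starRingEnd ℂ (S (-k) (-m) (-n)))
    (C : ℝ) (hC : 0 < C)
    (hSbound : ∀ k m n : ℤ, ‖S k m n‖ ≤
      C * min (|(k : ℝ)| ^ μ) (min (|(m : ℝ)| ^ μ) (|(n : ℝ)| ^ μ)))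
    (s : ℝ) (hs : μ + 3 / 2 < s)
    (a b : ℝ) (hab : (0 : ℝ) ∈ Set.Ioo a b)
    (u v : ℝ → ℤ → ℂ)
    (husol : IsSolution S s (Set.Ioo a b) u)
    (hvsol : IsSolution S s (Set.Ioo a b) v)
    (hinit : u 0 = v 0) :
    ∀ t ∈ Set.Ioo a b, u t = v t := by
  obtain ⟨hu, huc, hud, hug, hugc⟩ := husol
  obtain ⟨hv, hvc, hvd, hvg, hvgc⟩ := hvsol
  set I := Set.Ioo a b with hI
  have hs1 : 1 ≤ s := by linarith
  have hs0 : 0 ≤ s := by linarith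
  have hs2 : 0 ≤ s - 1 := by linarith
  have l2 : ∀ {r : ℝ} {f : ℤ → ℂ}, 0 ≤ r → InHs r f →
      Summable fun k : ℤ => |(k : ℝ)| ^ (2 * (0 : ℝ)) * ‖f k‖ ^ 2 :=
    fun hr hf => (hs_mono le_rfl hr hf.1 hf.2.2).1
  have l2' : ∀ {r : ℝ} {f : ℤ → ℂ}, 0 ≤ r → InHs r f → Summable fun k : ℤ => ‖f k‖ ^ 2 :=
    fun hr hf => by simpa using l2 hr hf
  set gu : ℝ → ℤ → ℂ := fun t k => -(Complex.I * (k : ℂ) * aHat S (u t) (u t) k) with hgu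
  set gv : ℝ → ℤ → ℂ := fun t k => -(Complex.I * (k : ℂ) * aHat S (v t) (v t) k) with hgv
  set g : ℝ → L2 := fun t => toL2 0 (gu t) - toL2 0 (gv t) with hg
  have gcont : ContinuousOn g I :=
    (cont_toL2 le_rfl hs2 hug hugc).sub (cont_toL2 le_rfl hs2 hvg hvgc)
  have gcoe : ∀ t ∈ I, ∀ k, g t k = gu t k - gv t k := by
    intro t ht k
    have : g t k = toL2 0 (gu t) k - toL2 0 (gv t) k := rfl
    rw [this, toL2_coe (l2 hs2 (hug t ht)), toL2_coe (l2 hs2 (hvg t ht))]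
    simp [wt, hgu, hgv]
    try ring
  have hsub : ∀ t ∈ I, Set.uIcc 0 t ⊆ I := fun t ht => Set.OrdConnected.uIcc_subset
    Set.ordConnected_Ioo hab ht
  have gint : ∀ t ∈ I, IntervalIntegrable g MeasureTheory.volume 0 t := fun t ht =>
    (gcont.mono (hsub t ht)).intervalIntegrable
  set G : ℝ → L2 := fun t => ∫ τ in (0 : ℝ)..t, g τ with hG
  have Gder : ∀ t ∈ I, HasDerivAt G (g t) t := fun t ht =>
    intervalIntegral.integral_hasDerivAt_right (gint t ht)
      (gcont.stronglyMeasurableAtFilter isOpen_Ioo t ht)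
      (gcont.continuousAt (isOpen_Ioo.mem_nhds ht))
  have Gcoe : ∀ t ∈ I, ∀ k, G t k = u t k - v t k := by
    intro t ht k
    let L := lp.evalCLM ℂ (fun _ : ℤ => ℂ) 2 k
    have hL : ∀ x : L2, L x = x k := fun x => rfl
    have h1 := L.intervalIntegral_comp_comm (gint t ht)
    rw [hL] at h1
    change _ = G t k at h1
    rw [← h1]
    have h2 := intervalIntegral.integral_eq_sub_of_hasDerivAt
      (f := fun τ => u τ k - v τ k) (f' := fun τ => L (g τ)) (a := 0) (b := t) (fun x hx => by
        rw [hL, gcoe x (hsub t ht hx)]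
        exact (hud x (hsub t ht hx) k).sub (hvd x (hsub t ht hx) k))
        ((L.continuous.comp_continuousOn (gcont.mono (hsub t ht))).intervalIntegrable)
    rw [h2]
    simp [hinit]
  -- the energy estimate
  set c := ∑' k : ℤ, |(k : ℝ)| ^ (-(2 * (s - 1 - μ)))
  let B : ℝ → ℝ := fun t => 2 * (C * (2 * c + ‖toL2 s (u t)‖ ^ 2 + ‖toL2 s (v t)‖ ^ 2))
  have Bcont : ContinuousOn B I := by
    have h1 := cont_toL2 hs0 le_rfl hu huc
    have h2 := cont_toL2 hs0 le_rfl hv hvc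
    fun_prop
  have energy : ∀ t ∈ I, |2 * inner ℝ (G t) (g t)| ≤ B t * |‖G t‖ ^ 2| := by
    intro t ht
    have iu := hu t ht
    have iv := hv t ht
    let p : ℤ → ℂ := fun k => u t k + v t k
    let w : ℤ → ℂ := fun k => u t k - v t k
    have wu := wiener hμ hs iu.1 iu.2.2
    have wv := wiener hμ hs iv.1 iv.2.2
    have ple : ∀ k : ℤ, |(k : ℝ)| ^ (1 + μ) * ‖p k‖ ≤
        |(k : ℝ)| ^ (1 + μ) * ‖u t k‖ + |(k : ℝ)| ^ (1 + μ) * ‖v t k‖ := by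
      intro k
      rw [← mul_add]
      gcongr
      exact norm_add_le _ _
    have hp : Summable fun k : ℤ => |(k : ℝ)| ^ (1 + μ) * ‖p k‖ :=
      Summable.of_nonneg_of_le (fun k => by positivity) ple (wu.1.add wv.1)
    have hple : ∑' k : ℤ, |(k : ℝ)| ^ (1 + μ) * ‖p k‖ ≤
        2 * c + ‖toL2 s (u t)‖ ^ 2 + ‖toL2 s (v t)‖ ^ 2 := by
      have := hp.tsum_le_tsum ple (wu.1.add wv.1)
      rw [wu.1.tsum_add wv.1] at this
      linarith [wu.2, wv.2]
    have hwG : ∀ k, G t k = w k := Gcoe t ht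
    have hw : Summable fun k : ℤ => ‖w k‖ ^ 2 := by
      simpa [hwG] using l2_summable (G t)
    have hw1 : Summable fun k : ℤ => (|(k : ℝ)| * ‖w k‖) ^ 2 := by
      have h1 := (hs_mono zero_le_one hs1 iu.1 iu.2.2).1
      have h2 := (hs_mono zero_le_one hs1 iv.1 iv.2.2).1
      have h3 := sub_summable h1 h2
      refine h3.congr fun k => ?_
      rw [mul_pow]
      norm_num
      exact Or.inl rfl
    have wr : ∀ k : ℤ, w (-k) = starRingEnd ℂ (w k) := by
      intro k
      simp only [w, iu.2.1, iv.2.1, map_sub]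
    have ke := key_estimate hμ hSsym hScyc hC hSbound (p := p) (w := w)
      (by simp [p, iu.1, iv.1]) hp wr hw hw1
    have gw : ∀ k, g t k = -(Complex.I * (k : ℂ) * aHat S p w k) := by
      intro k
      rw [gcoe t ht, ← aHat_diff hC hSsym hSbound (l2' hs0 iu) (l2' hs0 iv)]
      simp only [hgu, hgv]
      ring
    have hin : inner ℝ (G t) (g t) =
        (∑' k : ℤ, -(Complex.I * (k : ℂ) * aHat S p w k) * starRingEnd ℂ (w k)).re := by
      rw [lp.inner_eq_tsum, Complex.re_tsum ke.1]
      refine tsum_congr fun k => ?_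
      rw [Complex.inner, hwG, gw]
    rw [abs_mul, hin, abs_two, abs_of_nonneg (by positivity : 0 ≤ ‖G t‖ ^ 2), l2_norm_sq]
    simp only [B, hwG]
    rw [mul_assoc 2]
    refine mul_le_mul_of_nonneg_left ?_ zero_le_two
    refine (Complex.abs_re_le_norm _).trans (ke.2.trans ?_)
    have : 0 ≤ ∑' k : ℤ, ‖w k‖ ^ 2 := tsum_nonneg fun k => by positivity
    gcongr
  intro t ht
  -- compact subinterval
  obtain ⟨α, hα1, hα2⟩ := exists_between (lt_min hab.1 ht.1)
  obtain ⟨β, hβ1, hβ2⟩ := exists_between (max_lt hab.2 ht.2)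
  rw [lt_min_iff] at hα2
  rw [max_lt_iff] at hβ1
  have hcc : Set.Icc α β ⊆ I := fun x hx => ⟨hα1.trans_le hx.1, hx.2.trans_lt hβ2⟩
  obtain ⟨K, hK⟩ := isCompact_Icc.exists_bound_of_continuousOn (Bcont.mono hcc)
  have hz := gronwall_zero (α := α) (β := β) (K := K) (f := fun t => ‖G t‖ ^ 2)
    (f' := fun t => 2 * inner ℝ (G t) (g t)) ⟨hα2.1, hβ1.1⟩
    (fun x hx => (Gder x (hcc (Set.Ioo_subset_Icc_self hx))).norm_sq)
    (fun x hx => (energy x (hcc (Set.Ioo_subset_Icc_self hx))).trans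
      (mul_le_mul_of_nonneg_right ((le_abs_self _).trans (hK x (Set.Ioo_subset_Icc_self hx)))
        (abs_nonneg _)))
    (by simp [hG]) t ⟨hα2.2, hβ1.2⟩
  have hG0 : G t = 0 := by simpa using hz
  funext k
  have := Gcoe t ht k
  rw [hG0] at this
  exact (sub_eq_zero.1 this.symm)
end

section
/- For every s > 0 and λ ≥ 0 there exists a constant C_{s,λ} > 0 such that for all nonzero real numbers k, m, n with k + m + n = 0, one has |k|k|^{2s} + m|m|^{2s} + n|n|^{2s}| / min{|k|^λ, |m|^λ, |n|^λ} ≤ C_{s,λ} (|k|^s |m|^s |n|^{1−λ} + |n|^s |k|^s |m|^{1−λ} + |m|^s |n|^s |k|^{1−λ}). -/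
def WSI (s lam C k m n : ℝ) : Prop :=
  |k * |k| ^ (2 * s) + m * |m| ^ (2 * s) + n * |n| ^ (2 * s)| /
            min (|k| ^ lam) (min (|m| ^ lam) (|n| ^ lam)) ≤
          C * (|k| ^ s * |m| ^ s * |n| ^ (1 - lam) +
            |n| ^ s * |k| ^ s * |m| ^ (1 - lam) +
            |m| ^ s * |n| ^ s * |k| ^ (1 - lam))

lemma WSI.swap12 {s lam C k m n : ℝ} (h : WSI s lam C k m n) : WSI s lam C m k n := by
  unfold WSI at *
  rw [min_left_comm, add_comm (m * _) (k * _)]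
  linarith

lemma WSI.swap23 {s lam C k m n : ℝ} (h : WSI s lam C k m n) : WSI s lam C k n m := by
  unfold WSI at *
  rw [min_comm (|n| ^ lam), add_right_comm]
  linarith

lemma WSI.neg {s lam C k m n : ℝ} (h : WSI s lam C (-k) (-m) (-n)) : WSI s lam C k m n := by
  unfold WSI at *
  simp only [abs_neg] at h
  rw [← abs_neg (k * _ + _ + _)]
  convert h using 3
  ring

lemma WSI_core (s : ℝ) (hs : 0 < s) (a b : ℝ) (ha : 0 < a) (hab : a ≤ b) :
    |a * a ^ (2 * s) + b * b ^ (2 * s) - (a + b) * (a + b) ^ (2 * s)| ≤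
      (2 * s + 1) * 2 ^ s * (b ^ s * (a + b) ^ s * a) := by
  have hb : 0 < b := ha.trans_le hab
  obtain ⟨c, hc⟩ : ∃ c, c = a + b := ⟨_, rfl⟩
  rw [← hc]
  have hc0 : 0 < c := by linarith
  have h1 : a ^ (2 * s) ≤ c ^ (2 * s) :=
    Real.rpow_le_rpow ha.le (by linarith) (by linarith)
  have h2 : b ^ (2 * s) ≤ c ^ (2 * s) :=
    Real.rpow_le_rpow hb.le (by linarith) (by linarith)
  have ha2 : 0 < a ^ (2 * s) := Real.rpow_pos_of_pos ha _
  have hc2 : 0 < c ^ (2 * s) := Real.rpow_pos_of_pos hc0 _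
  have h3 : c ^ (2 * s) ≤ 2 ^ s * (b ^ s * c ^ s) := by
    rw [two_mul, Real.rpow_add hc0, ← mul_assoc, ← Real.mul_rpow (by norm_num) hb.le]
    have : c ^ s ≤ (2 * b) ^ s := Real.rpow_le_rpow hc0.le (by linarith) hs.le
    exact mul_le_mul_of_nonneg_right this (Real.rpow_pos_of_pos hc0 _).le
  have h4 : c * c ^ (2 * s) - b * b ^ (2 * s) ≤ (2 * s + 1) * c ^ (2 * s) * a := by
    have hB := one_add_mul_self_le_rpow_one_add (s := b / c - 1) (p := 2 * s + 1)
      (by have := div_pos hb hc0; linarith) (by linarith)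
    rw [add_sub_cancel, Real.div_rpow hb.le hc0.le, Real.rpow_add_one hb.ne',
      Real.rpow_add_one hc0.ne', le_div_iff₀ (by positivity)] at hB
    have : (1 + (2 * s + 1) * (b / c - 1)) * (c ^ (2 * s) * c)
        = c * c ^ (2 * s) - (2 * s + 1) * c ^ (2 * s) * a := by
      field_simp
      rw [hc]; ring
    linarith
  rw [abs_le]
  have h5 := mul_le_mul_of_nonneg_left h3 (show 0 ≤ (2 * s + 1) * a by positivity)
  have h6 := mul_le_mul_of_nonneg_left h1 ha.le
  have h7 := mul_le_mul_of_nonneg_left h2 hb.le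
  have h8 : c * c ^ (2 * s) = a * c ^ (2 * s) + b * c ^ (2 * s) := by rw [← add_mul, ← hc]
  have h9 : 0 < a * a ^ (2 * s) := by positivity
  have h10 : 0 < (2 * s + 1) * 2 ^ s * (b ^ s * c ^ s * a) := by positivity
  constructor <;> linarith

lemma WSI_le (s lam : ℝ) (hs : 0 < s) (hlam : 0 ≤ lam) (a b : ℝ) (ha : 0 < a) (hab : a ≤ b) :
    WSI s lam ((2 * s + 1) * 2 ^ s) a b (-(a + b)) := by
  have hb : 0 < b := ha.trans_le hab
  have hc : 0 < a + b := by linarith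
  unfold WSI
  rw [abs_neg, abs_of_pos ha, abs_of_pos hb, abs_of_pos hc]
  have e1 : a ^ lam ≤ b ^ lam := Real.rpow_le_rpow ha.le hab hlam
  have e2 : a ^ lam ≤ (a + b) ^ lam := Real.rpow_le_rpow ha.le (by linarith) hlam
  rw [min_eq_left (le_min e1 e2), neg_mul, ← sub_eq_add_neg]
  have hl : 0 < a ^ lam := Real.rpow_pos_of_pos ha _
  calc _ ≤ ((2 * s + 1) * 2 ^ s * (b ^ s * (a + b) ^ s * a)) / a ^ lam :=
        div_le_div_of_nonneg_right (WSI_core s hs a b ha hab) hl.le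
    _ = (2 * s + 1) * 2 ^ s * (b ^ s * (a + b) ^ s * a ^ (1 - lam)) := by
        rw [Real.rpow_sub ha, Real.rpow_one]; ring
    _ ≤ _ := by
        apply mul_le_mul_of_nonneg_left _ (by positivity)
        have : 0 < a ^ s * b ^ s * (a + b) ^ (1 - lam) := by positivity
        have : 0 < (a + b) ^ s * a ^ s * b ^ (1 - lam) := by positivity
        linarith

lemma WSI_pos (s lam : ℝ) (hs : 0 < s) (hlam : 0 ≤ lam) (a b c : ℝ) (ha : 0 < a) (hb : 0 < b)
    (h : a + b + c = 0) : WSI s lam ((2 * s + 1) * 2 ^ s) a b c := by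
  obtain rfl : c = -(a + b) := by linarith
  rcases le_total a b with h | h
  · exact WSI_le s lam hs hlam a b ha h
  · rw [add_comm a b]
    exact (WSI_le s lam hs hlam b a hb h).swap12

lemma WSI_same (s lam : ℝ) (hs : 0 < s) (hlam : 0 ≤ lam) (a b c : ℝ) (hab : 0 < a * b)
    (h : a + b + c = 0) : WSI s lam ((2 * s + 1) * 2 ^ s) a b c := by
  rcases mul_pos_iff.1 hab with ⟨ha, hb⟩ | ⟨ha, hb⟩
  · exact WSI_pos s lam hs hlam a b c ha hb h
  · exact (WSI_pos s lam hs hlam (-a) (-b) (-c) (by linarith) (by linarith) (by linarith)).neg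


/-- The weighted inequality of Proposition 4.1: for `s > 0`, `λ ≥ 0` there is a
constant `C_{s,λ}` such that for all nonzero reals `k,m,n` with `k+m+n = 0`,
`|k|k|^{2s} + m|m|^{2s} + n|n|^{2s}| / min{|k|^λ,|m|^λ,|n|^λ}
   ≤ C_{s,λ}(|k|^s|m|^s|n|^{1−λ} + |n|^s|k|^s|m|^{1−λ} + |m|^s|n|^s|k|^{1−λ})`. -/
theorem weighted_symmetric_inequality (s lam : ℝ) (hs : 0 < s) (hlam : 0 ≤ lam) :
    ∃ Cslam : ℝ, 0 < Cslam ∧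
      ∀ k m n : ℝ, k ≠ 0 → m ≠ 0 → n ≠ 0 → k + m + n = 0 →
        |k * |k| ^ (2 * s) + m * |m| ^ (2 * s) + n * |n| ^ (2 * s)| /
            min (|k| ^ lam) (min (|m| ^ lam) (|n| ^ lam)) ≤
          Cslam * (|k| ^ s * |m| ^ s * |n| ^ (1 - lam) +
            |n| ^ s * |k| ^ s * |m| ^ (1 - lam) +
            |m| ^ s * |n| ^ s * |k| ^ (1 - lam)) := by
  refine ⟨(2 * s + 1) * 2 ^ s, by positivity, ?_⟩
  intro k m n hk hm hn h
  change WSI s lam ((2 * s + 1) * 2 ^ s) k m n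
  rcases lt_or_gt_of_ne (mul_ne_zero hk hm) with h1 | h1
  · rcases lt_or_gt_of_ne (mul_ne_zero hk hn) with h2 | h2
    · have h3 : 0 < m * n := by
        have h4 := mul_pos_of_neg_of_neg h1 h2
        have h5 : k * m * (k * n) = k ^ 2 * (m * n) := by ring
        rw [h5] at h4
        exact pos_of_mul_pos_right h4 (sq_nonneg k)
      exact (WSI_same s lam hs hlam m n k h3 (by linarith)).swap23.swap12
    · exact (WSI_same s lam hs hlam k n m h2 (by linarith)).swap23
  · exact WSI_same s lam hs hlam k m n h1 h
end

section
/- For every s > 0 there exists a constant C_s > 0 such that for all real numbers k, m, n with k + m + n = 0, one has |k|k|^{2s} + m|m|^{2s} + n|n|^{2s}| ≤ C_s (|k|^s |m|^s |n| + |n|^s |k|^s |m| + |m|^s |n|^s |k|). -/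
theorem sym_aux1 (s : ℝ) (hs : 0 < s) (a b : ℝ) (hb : 0 ≤ b) (hab : b ≤ a) :
    |(a + b) * (a + b) ^ (2 * s) - a * a ^ (2 * s) - b * b ^ (2 * s)| ≤
      ((2 * s + 1) * 2 ^ (2 * s)) * ((a + b) ^ s * a ^ s * b) := by
  have ha : 0 ≤ a := hb.trans hab
  rcases ha.eq_or_lt with h0 | ha0
  · have : b = 0 := by linarith
    subst this
    subst h0
    simp
  have hx : 0 < a + b := by linarith
  have h1 : a ^ (2 * s) ≤ (a + b) ^ (2 * s) :=
    Real.rpow_le_rpow ha (by linarith) (by linarith)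
  have h2 : b ^ (2 * s) ≤ (a + b) ^ (2 * s) :=
    Real.rpow_le_rpow hb (by linarith) (by linarith)
  have hbn : 0 ≤ b ^ (2 * s) := Real.rpow_nonneg hb _
  have h3 : 0 ≤ (a + b) * (a + b) ^ (2 * s) - a * a ^ (2 * s) - b * b ^ (2 * s) := by
    nlinarith
  rw [abs_of_nonneg h3]
  have hB := one_add_mul_self_le_rpow_one_add (s := -(b / (a + b))) (p := 2 * s + 1)
    (by rw [neg_le_neg_iff, div_le_one hx]; linarith) (by linarith)
  have e1 : 1 + -(b / (a + b)) = a / (a + b) := by field_simp; ring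
  rw [e1, Real.div_rpow ha hx.le, Real.rpow_add ha0, Real.rpow_add hx, Real.rpow_one,
    Real.rpow_one] at hB
  have hX : 0 < (a + b) ^ (2 * s) := Real.rpow_pos_of_pos hx _
  rw [le_div_iff₀ (by positivity)] at hB
  have e2 : (1 + (2 * s + 1) * -(b / (a + b))) * ((a + b) ^ (2 * s) * (a + b))
      = (a + b) * (a + b) ^ (2 * s) - (2 * s + 1) * b * (a + b) ^ (2 * s) := by
    field_simp
    ring
  rw [e2] at hB
  have h4 : (a + b) ^ (2 * s) ≤ 2 ^ (2 * s) * a ^ (2 * s) := by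
    rw [← Real.mul_rpow (by norm_num) ha]
    exact Real.rpow_le_rpow hx.le (by linarith) (by linarith)
  have h5 : a ^ (2 * s) ≤ (a + b) ^ s * a ^ s := by
    rw [two_mul, Real.rpow_add ha0]
    gcongr
    linarith
  calc _ ≤ (2 * s + 1) * b * (a + b) ^ (2 * s) := by nlinarith
    _ ≤ (2 * s + 1) * b * (2 ^ (2 * s) * ((a + b) ^ s * a ^ s)) := by
        gcongr
        exact h4.trans (by gcongr)
    _ = _ := by ring

theorem sym_aux2 (s : ℝ) (hs : 0 < s) (a b c : ℝ) (h : a + b + c = 0) (hab : 0 ≤ a * b) :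
    |a * |a| ^ (2 * s) + b * |b| ^ (2 * s) + c * |c| ^ (2 * s)| ≤
      ((2 * s + 1) * 2 ^ (2 * s)) * (|a| ^ s * |b| ^ s * |c| + |c| ^ s * |a| ^ s * |b| +
            |b| ^ s * |c| ^ s * |a|) := by
  wlog ho : |b| ≤ |a| generalizing a b
  · have := this b a (by linarith) (by linarith) (by linarith)
    convert this using 2 <;> ring
  have key := sym_aux1 s hs |a| |b| (abs_nonneg _) ho
  have hc : |c| = |a| + |b| := by
    rw [show c = -(a + b) by linarith, abs_neg, abs_add_eq_add_abs_iff]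
    exact mul_nonneg_iff.mp hab
  have hl : |a * |a| ^ (2 * s) + b * |b| ^ (2 * s) + c * |c| ^ (2 * s)| =
      |(|a| + |b|) * (|a| + |b|) ^ (2 * s) - |a| * |a| ^ (2 * s) - |b| * |b| ^ (2 * s)| := by
    rw [hc, show c = -(a + b) by linarith]
    rcases mul_nonneg_iff.mp hab with ⟨h1, h2⟩ | ⟨h1, h2⟩
    · rw [abs_of_nonneg h1, abs_of_nonneg h2, ← abs_neg]
      congr 1
      ring
    · rw [abs_of_nonpos h1, abs_of_nonpos h2]
      congr 1
      ring
  rw [hl]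
  refine key.trans ?_
  rw [← hc]
  gcongr
  have p1 : 0 ≤ |a| ^ s * |b| ^ s * |c| := by positivity
  have p2 : 0 ≤ |b| ^ s * |c| ^ s * |a| := by positivity
  linarith

/-- The inequality (5.2): for `s > 0` there is a constant `C_s` such that for all
reals `k,m,n` with `k+m+n = 0`,
`|k|k|^{2s} + m|m|^{2s} + n|n|^{2s}| ≤ C_s(|k|^s|m|^s|n| + |n|^s|k|^s|m| + |m|^s|n|^s|k|)`. -/
theorem symmetric_inequality (s : ℝ) (hs : 0 < s) :
    ∃ Cs : ℝ, 0 < Cs ∧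
      ∀ k m n : ℝ, k + m + n = 0 →
        |k * |k| ^ (2 * s) + m * |m| ^ (2 * s) + n * |n| ^ (2 * s)| ≤
          Cs * (|k| ^ s * |m| ^ s * |n| + |n| ^ s * |k| ^ s * |m| +
            |m| ^ s * |n| ^ s * |k|) := by
  refine ⟨(2 * s + 1) * 2 ^ (2 * s), by positivity, fun k m n h => ?_⟩
  by_cases h1 : 0 ≤ k * m
  · exact sym_aux2 s hs k m n h h1
  by_cases h2 : 0 ≤ m * n
  · convert sym_aux2 s hs m n k (by linarith) h2 using 2 <;> ring
  have h3 : 0 ≤ n * k := by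
    by_contra h3
    rw [not_le] at h1 h2 h3
    have := mul_pos_of_neg_of_neg h1 h2
    nlinarith [sq_nonneg (k * m * n), mul_neg_of_pos_of_neg this h3]
  convert sym_aux2 s hs n k m (by linarith) h3 using 2 <;> ring
end

section
/- For s > 0 and λ ≥ 0, define f_{s,λ} : (0,1] → ℝ by f_{s,λ}(x) = ((x+1)^{2s+1} − x^{2s+1} − 1) / ((x+1)^s (x^{s+λ} + x) + (x+1)^{1−λ} x^{s+λ}). Then f_{s,λ} is continuous on (0,1] and has a finite limit as x → 0⁺, namely: lim_{x→0⁺} f_{s,λ}(x) = 0 if 0 < s + λ < 1; lim_{x→0⁺} f_{s,λ}(x) = (2s+1)/3 if s + λ = 1; and lim_{x→0⁺} f_{s,λ}(x) = 2s+1 if s + λ > 1. Consequently f_{s,λ} is bounded on (0,1]. -/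
open Filter

/-- Properties of the function `f_{s,λ}` from the proof of Proposition 4.1:
it is continuous on `(0,1]`, has the stated finite limit as `x → 0⁺`, and is
consequently bounded on `(0,1]`. -/
theorem f_s_lam_properties (s lam : ℝ) (hs : 0 < s) (hlam : 0 ≤ lam)
    (f : ℝ → ℝ)
    (hf : ∀ x : ℝ, 0 < x → x ≤ 1 →
      f x = ((x + 1) ^ (2 * s + 1) - x ^ (2 * s + 1) - 1) /
        ((x + 1) ^ s * (x ^ (s + lam) + x) + (x + 1) ^ (1 - lam) * x ^ (s + lam))) :
    ContinuousOn f (Set.Ioc 0 1) ∧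
    Tendsto f (nhdsWithin 0 (Set.Ioc 0 1))
      (nhds (if s + lam < 1 then 0 else if s + lam = 1 then (2 * s + 1) / 3 else 2 * s + 1)) ∧
    ∃ B : ℝ, ∀ x ∈ Set.Ioc (0 : ℝ) 1, |f x| ≤ B := by
  have hcont : ContinuousOn f (Set.Ioc 0 1) := by
    have hc : ContinuousOn (fun x : ℝ => ((x + 1) ^ (2 * s + 1) - x ^ (2 * s + 1) - 1) /
        ((x + 1) ^ s * (x ^ (s + lam) + x) + (x + 1) ^ (1 - lam) * x ^ (s + lam)))
        (Set.Ioc 0 1) := by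
      intro x hx
      have hx0 : 0 < x := hx.1
      have hx1 : 0 < x + 1 := by linarith
      have c1 : ∀ p : ℝ, ContinuousAt (fun x : ℝ => x ^ p) x := fun p =>
        Real.continuousAt_rpow_const x p (Or.inl hx0.ne')
      have c2 : ∀ p : ℝ, ContinuousAt (fun x : ℝ => (x + 1) ^ p) x := fun p =>
        (continuousAt_id.add continuousAt_const).rpow_const (Or.inl hx1.ne')
      apply ContinuousAt.continuousWithinAt
      refine ContinuousAt.div (((c2 _).sub (c1 _)).sub continuousAt_const)
        (((c2 _).mul ((c1 _).add continuousAt_id)).add ((c2 _).mul (c1 _))) ?_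
      show (x + 1) ^ s * (x ^ (s + lam) + x) + (x + 1) ^ (1 - lam) * x ^ (s + lam) ≠ 0
      positivity
    exact hc.congr (fun x hx => hf x hx.1 hx.2)
  have hlim : Tendsto f (nhdsWithin 0 (Set.Ioc 0 1))
      (nhds (if s + lam < 1 then 0 else if s + lam = 1 then (2 * s + 1) / 3 else 2 * s + 1)) := by
    have hid : Tendsto (fun x : ℝ => x) (nhdsWithin 0 (Set.Ioc 0 1)) (nhds 0) :=
      tendsto_id.mono_left nhdsWithin_le_nhds
    have hmem : ∀ᶠ x : ℝ in nhdsWithin 0 (Set.Ioc 0 1), x ∈ Set.Ioc (0:ℝ) 1 :=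
      self_mem_nhdsWithin
    have h1 : ∀ p : ℝ, Tendsto (fun x : ℝ => (x + 1) ^ p) (nhdsWithin 0 (Set.Ioc 0 1))
        (nhds 1) := by
      intro p
      have := (hid.add_const 1).rpow_const (p := p) (Or.inl (by norm_num))
      simpa using this
    have h0 : ∀ p : ℝ, 0 < p → Tendsto (fun x : ℝ => x ^ p) (nhdsWithin 0 (Set.Ioc 0 1))
        (nhds 0) := by
      intro p hp
      have := hid.rpow_const (p := p) (Or.inr hp.le)
      simpa [Real.zero_rpow hp.ne'] using this
    have hD : Tendsto (fun x : ℝ => ((x + 1) ^ (2 * s + 1) - 1) / x)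
        (nhdsWithin 0 (Set.Ioc 0 1)) (nhds (2 * s + 1)) := by
      have hd : HasDerivAt (fun x : ℝ => (x + 1) ^ (2 * s + 1)) (2 * s + 1) 0 := by
        have := ((hasDerivAt_id (0:ℝ)).add_const 1).rpow_const (p := 2 * s + 1)
          (Or.inl (by norm_num))
        simpa using this
      have h2 := hd.tendsto_slope_zero
      have h3 := h2.mono_left (nhdsWithin_mono (0:ℝ)
        (fun x (hx : x ∈ Set.Ioc (0:ℝ) 1) => (hx.1.ne' : x ∈ ({0}ᶜ : Set ℝ))))
      refine h3.congr (fun x => ?_)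
      simp [div_eq_inv_mul]
    have hN : Tendsto (fun x : ℝ => ((x + 1) ^ (2 * s + 1) - 1) / x - x ^ (2 * s))
        (nhdsWithin 0 (Set.Ioc 0 1)) (nhds (2 * s + 1)) := by
      simpa using hD.sub (h0 (2 * s) (by linarith))
    have hpow : ∀ x : ℝ, 0 < x → x ^ (2 * s + 1) = x ^ (2 * s) * x := fun x hx => by
      rw [Real.rpow_add_one hx.ne']
    split_ifs with ha hb
    · have hu := h0 (1 - (s + lam)) (by linarith)
      have hden := ((h1 s).mul (hu.const_add 1)).add (h1 (1 - lam))
      have hq := (hN.mul hu).div hden (by norm_num)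
      simp only [mul_zero, zero_div] at hq
      refine hq.congr' ?_
      filter_upwards [hmem] with x hx
      have hx0 : 0 < x := hx.1
      have e : x ^ (1 - (s + lam)) = x / x ^ (s + lam) := by
        rw [Real.rpow_sub hx0, Real.rpow_one]
      have hp : 0 < x ^ (s + lam) := by positivity
      have hA : 0 < (x + 1) ^ s := by positivity
      have hB : 0 < (x + 1) ^ (1 - lam) := by positivity
      rw [hf x hx.1 hx.2]
      simp only [Pi.div_apply]
      rw [e, hpow x hx0]
      generalize x ^ (s + lam) = P at *
      generalize (x + 1) ^ s = A at *
      generalize (x + 1) ^ (1 - lam) = B at *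
      generalize (x + 1) ^ (2 * s + 1) = C at *
      generalize x ^ (2 * s) = Q at *
      rw [div_eq_div_iff (by positivity) (by positivity)]
      field_simp
      ring
    all_goals
      have hu : Tendsto (fun x : ℝ => x ^ (s + lam - 1)) (nhdsWithin 0 (Set.Ioc 0 1))
          (nhds (if s + lam = 1 then 1 else 0)) := by
        split_ifs
        first
          | (have h' : s + lam - 1 = 0 := by linarith
             simp only [h', Real.rpow_zero]
             exact tendsto_const_nhds)
          | exact h0 _ (by
              have := lt_of_le_of_ne (not_lt.mp ha) (Ne.symm hb)
              linarith)
      have hden := ((h1 s).mul (hu.add_const 1)).add ((h1 (1 - lam)).mul hu)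
      have hq := hN.div hden (by split_ifs; norm_num)
      have hval : (2 * s + 1) / (1 * ((if s + lam = 1 then (1:ℝ) else 0) + 1) +
          1 * (if s + lam = 1 then (1:ℝ) else 0)) =
          if s + lam = 1 then (2 * s + 1) / 3 else 2 * s + 1 := by
        split_ifs; norm_num
      rw [hval] at hq
      simp only [hb, if_true, if_false] at hq
      refine hq.congr' ?_
      filter_upwards [hmem] with x hx
      have hx0 : 0 < x := hx.1
      have e : x ^ (s + lam - 1) = x ^ (s + lam) / x := by
        rw [Real.rpow_sub hx0, Real.rpow_one]
      have hp : 0 < x ^ (s + lam) := by positivity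
      have hA : 0 < (x + 1) ^ s := by positivity
      have hB : 0 < (x + 1) ^ (1 - lam) := by positivity
      rw [hf x hx.1 hx.2]
      try rw [hb] at e hp
      try rw [hb]
      simp only [Pi.div_apply]
      rw [e, hpow x hx0]
      try generalize x ^ (s + lam) = P at *
      try generalize x ^ (1:ℝ) = P at *
      generalize (x + 1) ^ s = A at *
      generalize (x + 1) ^ (1 - lam) = B at *
      generalize (x + 1) ^ (2 * s + 1) = C at *
      generalize x ^ (2 * s) = Q at *
      rw [div_eq_div_iff (by positivity) (by positivity)]
      field_simp
      ring
  refine ⟨hcont, hlim, ?_⟩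
  generalize (if s + lam < 1 then (0:ℝ) else if s + lam = 1 then (2 * s + 1) / 3
    else 2 * s + 1) = L at hlim
  rw [Metric.tendsto_nhdsWithin_nhds] at hlim
  obtain ⟨δ, hδ, h⟩ := hlim 1 one_pos
  obtain ⟨C, hC⟩ := (isCompact_Icc (a := δ) (b := (1:ℝ))).exists_bound_of_continuousOn
    (hcont.mono (fun x hx => ⟨lt_of_lt_of_le hδ hx.1, hx.2⟩))
  refine ⟨max C (|L| + 1), fun x hx => ?_⟩
  rcases lt_or_ge x δ with hlt | hge
  · have := h hx (by rw [Real.dist_eq, sub_zero, abs_of_pos hx.1]; exact hlt)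
    rw [Real.dist_eq] at this
    have h4 := abs_sub_abs_le_abs_sub (f x) L
    exact le_max_of_le_right (by linarith)
  · exact le_max_of_le_left (hC x ⟨hge, hx.2⟩)
end

section
/- Let ν ≥ 3/2 and let T : ℤ³ → ℂ satisfy T(k,m,n) = conj(T(−k,−m,−n)), T(k,m,n) = T(k,n,m), T(k,m,n) = T(m,n,k), T(k,m,n) = 0 whenever kmn = 0, and the bound |T(k,m,n)| ≤ C |kmn|^{1/2} min{|k|^{ν−3/2}, |m|^{ν−3/2}, |n|^{ν−3/2}}. Let s > ν + 1/2 and let I be an open time interval. Suppose φ̂ : ℤ × I → ℂ satisfies φ̂(0,t) = 0 and φ̂(−k,t) = conj(φ̂(k,t)), the Sobolev bound sup_{t∈I} Σ_k |k|^{2s}|φ̂(k,t)|² < ∞ with t ↦ φ̂(·,t) continuous into this norm, each φ̂(k,·) is differentiable, and the spectral evolution equation ∂_t φ̂(k,t) + i·sgn(k) Σ_{n∈ℤ} T(−k, k−n, n) φ̂(k−n,t) φ̂(n,t) = 0 holds for all k ∈ ℤ, t ∈ I. Then the momentum 𝒫(t) = Σ_{k=1}^∞ k |φ̂(k,t)|²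 is constant on I. -/
open scoped BigOperators
open Filter

lemma mc_psi (s σ : ℝ) (hσ : σ < s - 1/2) (h0 : 0 < σ) (B : ℝ) :
    ∃ M : ℝ, 0 ≤ M ∧ ∀ u : ℤ → ℂ, (Summable fun k : ℤ => |(k : ℝ)| ^ (2 * s) * ‖u k‖ ^ 2) →
      (∑' k : ℤ, |(k : ℝ)| ^ (2 * s) * ‖u k‖ ^ 2) ≤ B →
      (Summable fun k : ℤ => |(k : ℝ)| ^ σ * ‖u k‖) ∧
      (∑' k : ℤ, |(k : ℝ)| ^ σ * ‖u k‖) ≤ M := by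
  have hS : Summable fun k : ℤ => |(k : ℝ)| ^ (-(2 * s - 2 * σ)) :=
    Real.summable_abs_int_rpow (by linarith)
  refine ⟨max 0 ((∑' k : ℤ, |(k : ℝ)| ^ (-(2 * s - 2 * σ))) + B), le_max_left _ _, ?_⟩
  intro u hu hB
  have key : ∀ k : ℤ, |(k : ℝ)| ^ σ * ‖u k‖ ≤
      |(k : ℝ)| ^ (-(2 * s - 2 * σ)) + |(k : ℝ)| ^ (2 * s) * ‖u k‖ ^ 2 := by
    intro k
    rcases eq_or_ne k 0 with rfl | hk
    · simp only [Int.cast_zero, abs_zero]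
      rw [Real.zero_rpow h0.ne', zero_mul]
      positivity
    · have hx : 0 < |(k : ℝ)| := abs_pos.mpr (by exact_mod_cast hk)
      have e1 : |(k : ℝ)| ^ (-(2 * s - 2 * σ)) = (|(k : ℝ)| ^ (σ - s)) ^ 2 := by
        rw [← Real.rpow_natCast, ← Real.rpow_mul hx.le]; congr 1; push_cast; ring
      have e2 : |(k : ℝ)| ^ (2 * s) = (|(k : ℝ)| ^ s) ^ 2 := by
        rw [← Real.rpow_natCast, ← Real.rpow_mul hx.le]; congr 1; push_cast; ring
      have e3 : |(k : ℝ)| ^ σ = |(k : ℝ)| ^ (σ - s) * |(k : ℝ)| ^ s := by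
        rw [← Real.rpow_add hx]; congr 1; ring
      rw [e1, e2, e3]
      nlinarith [sq_nonneg (|(k : ℝ)| ^ (σ - s) - |(k : ℝ)| ^ s * ‖u k‖),
        sq_nonneg (|(k : ℝ)| ^ (σ - s)), sq_nonneg (|(k : ℝ)| ^ s * ‖u k‖)]
  have hsum : Summable fun k : ℤ => |(k : ℝ)| ^ σ * ‖u k‖ :=
    Summable.of_nonneg_of_le (fun k => by positivity) key (hS.add hu)
  refine ⟨hsum, le_max_of_le_right ?_⟩
  calc _ ≤ ∑' k : ℤ, (|(k : ℝ)| ^ (-(2 * s - 2 * σ)) + |(k : ℝ)| ^ (2 * s) * ‖u k‖ ^ 2) :=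
        hsum.tsum_le_tsum key (hS.add hu)
    _ = _ := hS.tsum_add hu
    _ ≤ _ := by linarith

lemma mc_pt (s B : ℝ) (u : ℤ → ℂ)
    (hu : Summable fun k : ℤ => |(k : ℝ)| ^ (2 * s) * ‖u k‖ ^ 2)
    (hB : (∑' k : ℤ, |(k : ℝ)| ^ (2 * s) * ‖u k‖ ^ 2) ≤ B) (k : ℤ) (hk : k ≠ 0) :
    |(k : ℝ)| ^ ((1:ℝ)/2) * ‖u k‖ ≤ (1 + B) * |(k : ℝ)| ^ (-(s - 1/2)) := by
  have hx : 0 < |(k : ℝ)| := abs_pos.mpr (by exact_mod_cast hk)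
  have h1 := hu.le_tsum k (fun j _ => by positivity)
  have e2 : |(k : ℝ)| ^ (2 * s) = (|(k : ℝ)| ^ s) ^ 2 := by
    rw [← Real.rpow_natCast, ← Real.rpow_mul hx.le]; congr 1; push_cast; ring
  have e3 : |(k : ℝ)| ^ ((1:ℝ)/2) = |(k : ℝ)| ^ (-(s - 1/2)) * |(k : ℝ)| ^ s := by
    rw [← Real.rpow_add hx]; congr 1; ring
  rw [e2] at h1
  have h2 : |(k : ℝ)| ^ s * ‖u k‖ ≤ 1 + B := by
    nlinarith [sq_nonneg (|(k : ℝ)| ^ s * ‖u k‖ - 1)]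
  rw [e3, mul_assoc, mul_comm]
  gcongr

lemma mc_kernel (ν : ℝ) (hν : 3 / 2 ≤ ν) (T : ℤ → ℤ → ℤ → ℂ)
    (hT0 : ∀ k m n : ℤ, k * m * n = 0 → T k m n = 0)
    (C : ℝ) (hC : 0 < C)
    (hTbound : ∀ k m n : ℤ, ‖T k m n‖ ≤
      C * (|(k : ℝ)| * |(m : ℝ)| * |(n : ℝ)|) ^ ((1 : ℝ) / 2) *
        min (|(k : ℝ)| ^ (ν - 3 / 2)) (min (|(m : ℝ)| ^ (ν - 3 / 2)) (|(n : ℝ)| ^ (ν - 3 / 2))))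
    (p q r : ℤ) (h : p + q + r = 0) :
    |(p : ℝ)| * ‖T p q r‖ ≤ 2 * C * |(p : ℝ)| ^ ((1:ℝ)/2) * (|(q : ℝ)| ^ ν * |(r : ℝ)| ^ ν) := by
  by_cases h0 : p * q * r = 0
  · rw [hT0 _ _ _ h0, norm_zero, mul_zero]; positivity
  have hp : p ≠ 0 := by rintro rfl; simp at h0
  have hq : q ≠ 0 := by rintro rfl; simp at h0
  have hr : r ≠ 0 := by rintro rfl; simp at h0
  have hp1 : (1:ℝ) ≤ |(p : ℝ)| := by exact_mod_cast Int.one_le_abs hp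
  have hq1 : (1:ℝ) ≤ |(q : ℝ)| := by exact_mod_cast Int.one_le_abs hq
  have hr1 : (1:ℝ) ≤ |(r : ℝ)| := by exact_mod_cast Int.one_le_abs hr
  have hpqr : |(p : ℝ)| ≤ |(q : ℝ)| + |(r : ℝ)| := by
    have : (p : ℝ) = -(q + r) := by
      have : (p + q + r : ℝ) = 0 := by exact_mod_cast h
      linarith
    rw [this, abs_neg]; exact abs_add_le _ _
  have hT := hTbound p q r
  generalize |(p : ℝ)| = x at *
  generalize |(q : ℝ)| = y at *
  generalize |(r : ℝ)| = z at *
  have hx : 0 < x := by linarith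
  have hy : 0 < y := by linarith
  have hz : 0 < z := by linarith
  have h2 : x ≤ 2 * (y * z) := by nlinarith
  have e : ∀ y : ℝ, 0 < y → y ^ ν = y * y ^ ((1:ℝ)/2) * y ^ (ν - 3/2) := by
    intro y hy
    nth_rewrite 2 [← Real.rpow_one y]
    rw [← Real.rpow_add hy, ← Real.rpow_add hy]; congr 1; ring
  have hm : min (x ^ (ν - 3 / 2)) (min (y ^ (ν - 3 / 2)) (z ^ (ν - 3 / 2))) ≤
      y ^ (ν - 3 / 2) * z ^ (ν - 3 / 2) := by
    refine (min_le_right _ _).trans ((min_le_left _ _).trans ?_)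
    exact le_mul_of_one_le_right (by positivity) (Real.one_le_rpow hr1 (by linarith))
  rw [Real.mul_rpow (by positivity) hz.le, Real.mul_rpow hx.le hy.le] at hT
  rw [e y hy, e z hz]
  calc x * ‖T p q r‖ ≤ (2 * (y * z)) * (C * (x ^ ((1:ℝ)/2) * y ^ ((1:ℝ)/2) * z ^ ((1:ℝ)/2)) *
      (y ^ (ν - 3 / 2) * z ^ (ν - 3 / 2))) := by
        refine mul_le_mul h2 (hT.trans ?_) (norm_nonneg _) (by positivity)
        gcongr
    _ = _ := by ring

lemma mc_sym (H : ℤ × ℤ → ℂ) (hsw : ∀ p q, H (q, p) = H (p, q))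
    (hcy : ∀ p q, H (-p - q, p) = H (p, q))
    (hS : Summable fun x : ℤ × ℤ => (x.1 : ℂ) * H x) :
    ∑' x : ℤ × ℤ, (x.1 : ℂ) * H x = 0 := by
  let e : ℤ × ℤ ≃ ℤ × ℤ :=
    { toFun := fun x => (-x.1 - x.2, x.1)
      invFun := fun x => (x.2, -x.1 - x.2)
      left_inv := fun x => by ext <;> simp
      right_inv := fun x => by ext <;> simp <;> ring }
  have h1 : HasSum (fun x : ℤ × ℤ => (x.2 : ℂ) * H x) (∑' x : ℤ × ℤ, (x.1 : ℂ) * H x) := by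
    have := (Equiv.prodComm ℤ ℤ).hasSum_iff.mpr hS.hasSum
    convert this using 2 with x
    obtain ⟨p, q⟩ := x
    simp [hsw]
  have h2 : HasSum (fun x : ℤ × ℤ => ((-x.1 - x.2 : ℤ) : ℂ) * H x)
      (∑' x : ℤ × ℤ, (x.1 : ℂ) * H x) := by
    have := e.hasSum_iff.mpr hS.hasSum
    convert this using 2 with x
    obtain ⟨p, q⟩ := x
    simp [e, hcy]
  have h3 := (hS.hasSum.add h1).add h2
  have h4 : (fun x : ℤ × ℤ => (x.1 : ℂ) * H x + (x.2 : ℂ) * H x +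
      ((-x.1 - x.2 : ℤ) : ℂ) * H x) = fun _ => 0 := by
    funext x; push_cast; ring
  rw [h4] at h3
  have h5 := h3.unique hasSum_zero
  have : (3 : ℂ) * ∑' x : ℤ × ℤ, (x.1 : ℂ) * H x = 0 := by rw [← h5]; ring
  simpa using this

/-- the flux -/
noncomputable def mcF (T : ℤ → ℤ → ℤ → ℂ) (u : ℤ → ℂ) (k : ℤ) : ℂ :=
  u (-k) * ∑' n : ℤ, T (-k) (k - n) n * u (k - n) * u n

lemma mc_conj (T : ℤ → ℤ → ℤ → ℂ) (u : ℤ → ℂ)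
    (hTreal : ∀ k m n : ℤ, T k m n = starRingEnd ℂ (T (-k) (-m) (-n)))
    (hconj : ∀ k : ℤ, u (-k) = starRingEnd ℂ (u k)) (k : ℤ) :
    mcF T u (-k) = starRingEnd ℂ (mcF T u k) := by
  unfold mcF
  rw [map_mul, ← hconj, Complex.conj_tsum, ← (Equiv.neg ℤ).tsum_eq]
  congr 1
  refine tsum_congr fun n => ?_
  simp only [Equiv.neg_apply, map_mul]
  rw [← hconj n, ← hconj (k - n), hTreal (- -k)]
  congr 4 <;> ring_nf

lemma mc_bound (ν : ℝ) (T : ℤ → ℤ → ℤ → ℂ) (C : ℝ) (hC : 0 < C)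
    (hK : ∀ p q r : ℤ, p + q + r = 0 → |(p : ℝ)| * ‖T p q r‖ ≤
      2 * C * |(p : ℝ)| ^ ((1:ℝ)/2) * (|(q : ℝ)| ^ ν * |(r : ℝ)| ^ ν))
    (u : ℤ → ℂ) (M : ℝ) (hs : Summable fun k : ℤ => |(k : ℝ)| ^ ν * ‖u k‖)
    (hM : (∑' k : ℤ, |(k : ℝ)| ^ ν * ‖u k‖) ≤ M) (k : ℤ) :
    |(k : ℝ)| * ‖mcF T u k‖ ≤ 2 * C * (M * M) * (|(k : ℝ)| ^ ((1:ℝ)/2) * ‖u (-k)‖) := by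
  have hpt : ∀ j : ℤ, |(j : ℝ)| ^ ν * ‖u j‖ ≤ M := fun j =>
    (hs.le_tsum j (fun j _ => by positivity)).trans hM
  have hM0 : 0 ≤ M := le_trans (by positivity) (hpt 0)
  set A := 2 * C * |(k : ℝ)| ^ ((1:ℝ)/2) * M with hA
  have hA0 : 0 ≤ A := by positivity
  have hterm : ∀ n : ℤ, ‖(k : ℂ) * (T (-k) (k - n) n * u (k - n) * u n)‖ ≤
      A * (|(n : ℝ)| ^ ν * ‖u n‖) := by
    intro n
    have h1 := hK (-k) (k - n) n (by ring)
    rw [Int.cast_neg, abs_neg] at h1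
    have h2 := hpt (k - n)
    simp only [norm_mul, Complex.norm_intCast]
    calc _ = (|(k : ℝ)| * ‖T (-k) (k - n) n‖) * (‖u (k - n)‖ * ‖u n‖) := by ring
      _ ≤ (2 * C * |(k : ℝ)| ^ ((1:ℝ)/2) * (|((k - n : ℤ) : ℝ)| ^ ν * |(n : ℝ)| ^ ν)) *
          (‖u (k - n)‖ * ‖u n‖) := by gcongr
      _ = 2 * C * |(k : ℝ)| ^ ((1:ℝ)/2) * (|((k - n : ℤ) : ℝ)| ^ ν * ‖u (k - n)‖) *
          (|(n : ℝ)| ^ ν * ‖u n‖) := by ring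
      _ ≤ _ := by rw [hA]; gcongr
  have h3 := tsum_of_norm_bounded (hs.mul_left A).hasSum hterm
  rw [tsum_mul_left, tsum_mul_left, norm_mul, Complex.norm_intCast] at h3
  unfold mcF
  rw [norm_mul]
  calc _ = (|(k : ℝ)| * ‖∑' n : ℤ, T (-k) (k - n) n * u (k - n) * u n‖) * ‖u (-k)‖ := by ring
    _ ≤ (A * M) * ‖u (-k)‖ := by
      refine mul_le_mul_of_nonneg_right (h3.trans ?_) (norm_nonneg _)
      exact mul_le_mul_of_nonneg_left hM hA0
    _ = _ := by rw [hA]; ring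

lemma mc_sum (ν : ℝ) (hν : 3/2 ≤ ν) (T : ℤ → ℤ → ℤ → ℂ) (C : ℝ) (hC : 0 < C)
    (hTsym : ∀ k m n : ℤ, T k m n = T k n m)
    (hTcyc : ∀ k m n : ℤ, T k m n = T m n k)
    (hK : ∀ p q r : ℤ, p + q + r = 0 → |(p : ℝ)| * ‖T p q r‖ ≤
      2 * C * |(p : ℝ)| ^ ((1:ℝ)/2) * (|(q : ℝ)| ^ ν * |(r : ℝ)| ^ ν))
    (u : ℤ → ℂ) (M : ℝ) (hs : Summable fun k : ℤ => |(k : ℝ)| ^ ν * ‖u k‖)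
    (hM : (∑' k : ℤ, |(k : ℝ)| ^ ν * ‖u k‖) ≤ M) :
    HasSum (fun k : ℤ => (k : ℂ) * mcF T u k) 0 := by
  have hpt : ∀ j : ℤ, |(j : ℝ)| ^ ν * ‖u j‖ ≤ M := fun j =>
    (hs.le_tsum j (fun j _ => by positivity)).trans hM
  have hM0 : 0 ≤ M := le_trans (by positivity) (hpt 0)
  let H : ℤ × ℤ → ℂ := fun x => T x.1 x.2 (-x.1 - x.2) * u x.1 * u x.2 * u (-x.1 - x.2)
  have hS : Summable fun x : ℤ × ℤ => (x.1 : ℂ) * H x := by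
    have h1 := (hs.mul_of_nonneg hs (fun k => by positivity) (fun k => by positivity)).mul_left
      (2 * C * M)
    refine Summable.of_norm_bounded h1 ?_
    rintro ⟨p, q⟩
    have hk := hK p q (-p - q) (by ring)
    have h2 := hpt (-p - q)
    have h3 : |(p : ℝ)| * ‖T p q (-p-q)‖ ≤
      2 * C * |(p : ℝ)| ^ ν * (|(q : ℝ)| ^ ν * |((-p-q : ℤ) : ℝ)| ^ ν) := by
      rcases eq_or_ne p 0 with rfl | hp
      · simp only [Int.cast_zero, abs_zero, zero_mul]; positivity
      · refine hk.trans ?_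
        have hp1 : (1:ℝ) ≤ |(p : ℝ)| := by exact_mod_cast Int.one_le_abs hp
        gcongr
        linarith
    simp only [H, norm_mul, Complex.norm_intCast]
    calc _ = (|(p : ℝ)| * ‖T p q (-p-q)‖) * (‖u p‖ * ‖u q‖ * ‖u (-p-q)‖) := by ring
      _ ≤ (2 * C * |(p : ℝ)| ^ ν * (|(q : ℝ)| ^ ν * |((-p-q : ℤ) : ℝ)| ^ ν)) *
        (‖u p‖ * ‖u q‖ * ‖u (-p-q)‖) := by gcongr
      _ = 2 * C * (|((-p-q : ℤ) : ℝ)| ^ ν * ‖u (-p-q)‖) *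
        ((|(p : ℝ)| ^ ν * ‖u p‖) * (|(q : ℝ)| ^ ν * ‖u q‖)) := by ring
      _ ≤ _ := by gcongr
  have hz := mc_sym H ?_ ?_ hS
  · have h1 : HasSum (fun p : ℤ => ∑' q : ℤ, (p : ℂ) * H (p, q)) 0 := by
      have := hS.hasSum
      rw [hz] at this
      exact this.prod_fiberwise (fun p => (hS.prod_factor p).hasSum)
    have h2 := ((Equiv.neg ℤ).hasSum_iff.mpr h1).neg
    rw [neg_zero] at h2
    have h3 : (fun k : ℤ => (k : ℂ) * mcF T u k) = fun k : ℤ => -((fun p : ℤ => ∑' q : ℤ, (p : ℂ) * H (p, q)) ∘ (Equiv.neg ℤ)) k := ?_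
    · rw [h3]; exact h2
    funext k
    simp only [Function.comp, Equiv.neg_apply, mcF, H]
    rw [← tsum_mul_left, ← tsum_mul_left, ← tsum_neg]
    refine tsum_congr fun n => ?_
    rw [hTsym (-k) (k - n) n]
    have : - -k - n = k - n := by ring
    rw [this]; push_cast; ring
  · intro p q
    simp only [H]
    have e : -q - p = -p - q := by ring
    rw [e, hTcyc q p, hTsym p _ q]; ring
  · intro p q
    simp only [H]
    have e : -(-p - q) - p = q := by ring
    rw [e, hTcyc (-p - q) p q]; ring

/-- Conservation of the momentum `𝒫 = Σ_{k≥1} k |φ̂(k,t)|²` for solutions of the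
spectral evolution equation. -/
theorem momentum_conserved
    (ν : ℝ) (hν : 3 / 2 ≤ ν) (T : ℤ → ℤ → ℤ → ℂ)
    (hTreal : ∀ k m n : ℤ, T k m n = starRingEnd ℂ (T (-k) (-m) (-n)))
    (hTsym : ∀ k m n : ℤ, T k m n = T k n m)
    (hTcyc : ∀ k m n : ℤ, T k m n = T m n k)
    (hT0 : ∀ k m n : ℤ, k * m * n = 0 → T k m n = 0)
    (C : ℝ) (hC : 0 < C)
    (hTbound : ∀ k m n : ℤ, ‖T k m n‖ ≤
      C * (|(k : ℝ)| * |(m : ℝ)| * |(n : ℝ)|) ^ ((1 : ℝ) / 2) *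
        min (|(k : ℝ)| ^ (ν - 3 / 2)) (min (|(m : ℝ)| ^ (ν - 3 / 2)) (|(n : ℝ)| ^ (ν - 3 / 2))))
    (s : ℝ) (hs : ν + 1 / 2 < s)
    (a b : ℝ) (φ : ℝ → ℤ → ℂ)
    (hzero : ∀ t ∈ Set.Ioo a b, φ t 0 = 0)
    (hconj : ∀ t ∈ Set.Ioo a b, ∀ k : ℤ, φ t (-k) = starRingEnd ℂ (φ t k))
    (hsummable : ∀ t ∈ Set.Ioo a b,
      Summable fun k : ℤ => |(k : ℝ)| ^ (2 * s) * ‖φ t k‖ ^ 2)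
    (hbound : ∃ B : ℝ, ∀ t ∈ Set.Ioo a b,
      (∑' k : ℤ, |(k : ℝ)| ^ (2 * s) * ‖φ t k‖ ^ 2) ≤ B)
    (hcont : HsContOn s φ (Set.Ioo a b))
    (heq : ∀ t ∈ Set.Ioo a b, ∀ k : ℤ,
      HasDerivAt (fun τ => φ τ k)
        (-(Complex.I * (Int.sign k : ℂ) *
          ∑' n : ℤ, T (-k) (k - n) n * φ t (k - n) * φ t n)) t) :
    ∀ t ∈ Set.Ioo a b, ∀ t' ∈ Set.Ioo a b,
      ∑' k : ℕ, (k : ℝ) * ‖φ t (k : ℤ)‖ ^ 2 =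
        ∑' k : ℕ, (k : ℝ) * ‖φ t' (k : ℤ)‖ ^ 2 := by
  obtain ⟨B, hB⟩ := hbound
  have hK := mc_kernel ν hν T hT0 C hC hTbound
  obtain ⟨M, hM0, hM⟩ := mc_psi s ν (by linarith) (by linarith) B
  have hder : ∀ k : ℕ, ∀ t ∈ Set.Ioo a b,
      HasDerivAt (fun τ => (k : ℝ) * ‖φ τ (k : ℤ)‖ ^ 2)
        (2 * (k : ℝ) * (mcF T (φ t) (k : ℤ)).im) t := by
    intro k t ht
    have h1 := ((heq t ht (k : ℤ)).norm_sq).const_mul (k : ℝ)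
    refine h1.congr_deriv ?_
    symm
    rcases Nat.eq_zero_or_pos k with rfl | hk
    · simp
    · have hsg : Int.sign (k : ℤ) = 1 := Int.sign_eq_one_of_pos (by exact_mod_cast hk)
      rw [hsg, Complex.inner, mcF, hconj t ht]
      generalize (∑' n : ℤ, T (-(k : ℤ)) (k - n) n * φ t (k - n) * φ t n) = S
      simp
      ring
  have hu : Summable fun k : ℕ => 2 * (2 * C * (M * M) * ((1 + B) * |((k : ℤ) : ℝ)| ^ (-(s - 1/2)))) := by
    have := (Real.summable_abs_int_rpow (b := s - 1/2) (by linarith)).comp_injective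
      (Nat.cast_injective (R := ℤ))
    exact (((this.mul_left (1 + B)).mul_left _).mul_left 2)
  have hbd : ∀ k : ℕ, ∀ t ∈ Set.Ioo a b, ‖2 * (k : ℝ) * (mcF T (φ t) (k : ℤ)).im‖ ≤
      2 * (2 * C * (M * M) * ((1 + B) * |((k : ℤ) : ℝ)| ^ (-(s - 1/2)))) := by
    intro k t ht
    have hB0 : 0 ≤ B := le_trans (tsum_nonneg fun k => by positivity) (hB t ht)
    rcases Nat.eq_zero_or_pos k with rfl | hk
    · simp only [Nat.cast_zero, mul_zero, zero_mul, norm_zero]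
      positivity
    · obtain ⟨m1, m2⟩ := hM _ (hsummable t ht) (hB t ht)
      have h1 := mc_bound ν T C hC hK (φ t) M m1 m2 (k : ℤ)
      have h2 := mc_pt s B (φ t) (hsummable t ht) (hB t ht) (k : ℤ) (by exact_mod_cast hk.ne')
      have h3 := Complex.abs_im_le_norm (mcF T (φ t) (k : ℤ))
      rw [hconj t ht, RCLike.norm_conj] at h1
      have h4 : |((k : ℤ) : ℝ)| = (k : ℝ) := by simp
      calc _ = 2 * (|((k : ℤ) : ℝ)| * |(mcF T (φ t) (k : ℤ)).im|) := by
            rw [norm_mul, norm_mul, h4]; simp [mul_assoc]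
        _ ≤ 2 * (|((k : ℤ) : ℝ)| * ‖mcF T (φ t) (k : ℤ)‖) := by gcongr
        _ ≤ _ := by
          refine mul_le_mul_of_nonneg_left (h1.trans ?_) (by norm_num)
          gcongr
  have hz : ∀ t ∈ Set.Ioo a b, ∑' k : ℕ, 2 * (k : ℝ) * (mcF T (φ t) (k : ℤ)).im = 0 := by
    intro t ht
    obtain ⟨m1, m2⟩ := hM _ (hsummable t ht) (hB t ht)
    have h1 := Complex.hasSum_im (mc_sum ν hν T C hC hTsym hTcyc hK (φ t) M m1 m2)
    have h2 := h1.nat_add_neg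
    have h3 : (fun k : ℕ => 2 * (k : ℝ) * (mcF T (φ t) (k : ℤ)).im) = fun n : ℕ =>
        (((n : ℤ) : ℂ) * mcF T (φ t) (n : ℤ)).im +
        (((-(n : ℤ) : ℤ) : ℂ) * mcF T (φ t) (-(n : ℤ))).im := by
      funext n
      rw [mc_conj T (φ t) hTreal (hconj t ht)]
      simp
      ring
    rw [h3, h2.tsum_eq]
    simp
  have hsum0 : ∀ t ∈ Set.Ioo a b, Summable fun k : ℕ => (k : ℝ) * ‖φ t (k : ℤ)‖ ^ 2 := by
    intro t ht
    have h1 := (hsummable t ht).comp_injective (Nat.cast_injective (R := ℤ))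
    refine Summable.of_nonneg_of_le (fun k => by positivity) (fun k => ?_) h1
    simp only [Function.comp]
    rcases Nat.eq_zero_or_pos k with rfl | hk
    · simp; positivity
    · have hk1 : (1:ℝ) ≤ k := by exact_mod_cast hk
      have h4 : |((k : ℤ) : ℝ)| = (k : ℝ) := by simp
      rw [h4]
      gcongr
      exact Real.self_le_rpow_of_one_le hk1 (by linarith)
  intro t ht t' ht'
  have hD : ∀ y ∈ Set.Ioo a b,
      HasDerivAt (fun z => ∑' k : ℕ, (k : ℝ) * ‖φ z (k : ℤ)‖ ^ 2) 0 y := by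
    intro y hy
    have := hasDerivAt_tsum_of_isPreconnected hu isOpen_Ioo isPreconnected_Ioo hder hbd ht
      (hsum0 t ht) hy
    rwa [hz y hy] at this
  exact isOpen_Ioo.is_const_of_deriv_eq_zero isPreconnected_Ioo
    (fun y hy => (hD y hy).differentiableAt.differentiableWithinAt)
    (fun y hy => (hD y hy).deriv) ht ht'
end

section
/- Let ν ≥ 3/2 and let T : ℤ³ → ℂ satisfy T(k,m,n) = conj(T(−k,−m,−n)), T(k,m,n) = T(k,n,m), T(k,m,n) = T(m,n,k), T(k,m,n) = 0 whenever kmn = 0, and the bound |T(k,m,n)| ≤ C |kmn|^{1/2} min{|k|^{ν−3/2}, |m|^{ν−3/2}, |n|^{ν−3/2}}. Let s > ν + 1/2 and let I be an open time interval. Suppose φ̂ : ℤ × I → ℂ satisfies φ̂(0,t) = 0 and φ̂(−k,t) = conj(φ̂(k,t)), the Sobolev bound sup_{t∈I} Σ_k |k|^{2s}|φ̂(k,t)|² < ∞ with t ↦ φ̂(·,t) continuous into this norm, each φ̂(k,·) is differentiable, and the spectral evolution equation ∂_t φ̂(k,t) + i·sgn(k) Σ_{n∈ℤ} T(−k, k−n,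 n) φ̂(k−n,t) φ̂(n,t) = 0 holds for all k ∈ ℤ, t ∈ I. Then the Hamiltonian ℋ(t) = Σ_{m,n=1}^∞ [ T(−m−n, m, n) conj(φ̂(m+n,t)) φ̂(m,t) φ̂(n,t) + conj(T(−m−n, m, n)) conj(φ̂(m,t)) conj(φ̂(n,t)) φ̂(m+n,t) ] is constant on I. -/
open scoped BigOperators
open Filter

theorem hc_zero (T : ℤ → ℤ → ℤ → ℂ)
    (hTsym : ∀ k m n : ℤ, T k m n = T k n m)
    (hTcyc : ∀ k m n : ℤ, T k m n = T m n k)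
    (u v : ℤ → ℂ) (w : ℤ → ℝ) (M K : ℝ) (hw : Summable w) (hw0 : ∀ k, 0 ≤ w k)
    (hA : ∀ k m n : ℤ, k + m + n = 0 → ‖T k m n * u m * u n‖ ≤ M * (w m * w n))
    (hv : ∀ k, v k = -(Complex.I * (Int.sign k : ℂ) *
          ∑' n : ℤ, T (-k) (k - n) n * u (k - n) * u n))
    (hvK : ∀ k, ‖v k‖ ≤ K) :
    ∑' p : ℤ × ℤ, T (-(p.1+p.2)) p.1 p.2 * v (-(p.1+p.2)) * u p.1 * u p.2 = 0 := by
  have hww : Summable (fun p : ℤ × ℤ => w p.1 * w p.2) := hw.mul_of_nonneg hw hw0 hw0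
  have hsum : Summable fun p : ℤ × ℤ =>
      T (-(p.1+p.2)) p.1 p.2 * v (-(p.1+p.2)) * u p.1 * u p.2 := by
    refine Summable.of_norm_bounded (hww.mul_left (K * M)) fun p => ?_
    have h1 := hA (-(p.1+p.2)) p.1 p.2 (by ring)
    have h2 := hvK (-(p.1+p.2))
    calc _ = ‖v (-(p.1+p.2))‖ * ‖T (-(p.1+p.2)) p.1 p.2 * u p.1 * u p.2‖ := by
            rw [← norm_mul]; congr 1; ring
      _ ≤ K * (M * (w p.1 * w p.2)) :=
            mul_le_mul h2 h1 (norm_nonneg _) ((norm_nonneg _).trans h2)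
      _ = _ := by ring
  let e : ℤ × ℤ ≃ ℤ × ℤ :=
    { toFun := fun p => (-p.1 - p.2, p.2)
      invFun := fun p => (-p.1 - p.2, p.2)
      left_inv := fun p => by ext <;> simp
      right_inv := fun p => by ext <;> simp }
  rw [← e.tsum_eq]
  have hsum2 := (e.summable_iff).2 hsum
  refine (Summable.tsum_prod hsum2).trans ?_
  have h3 : ∀ k : ℤ, ∑' n : ℤ, (fun p : ℤ × ℤ => T (-(p.1+p.2)) p.1 p.2 * v (-(p.1+p.2)) * u p.1 * u p.2) (e (k, n))
      = v k * ∑' n : ℤ, T (-(-k)) ((-k) - n) n * u ((-k) - n) * u n := by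
    intro k
    rw [← tsum_mul_left]
    congr 1
    ext n
    have : -((e (k,n)).1 + (e (k,n)).2) = k := by simp [e]
    simp only [this]
    simp only [e, Equiv.coe_fn_mk, neg_neg]
    ring
  refine (tsum_congr h3).trans ?_
  set N : ℤ → ℂ := fun k => ∑' n : ℤ, T (-k) (k - n) n * u (k - n) * u n with hN
  have h5 : ∀ k, v k = -(Complex.I * (Int.sign k : ℂ) * N k) := hv
  change ∑' k, v k * N (-k) = 0
  have h6 : ∑' k, v k * N (-k) = - ∑' k, v k * N (-k) := by
    conv_lhs => rw [← (Equiv.neg ℤ).tsum_eq]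
    rw [← tsum_neg]
    congr 1
    ext k
    simp [h5]
    ring
  exact self_eq_neg.1 h6

set_option maxHeartbeats 1000000 in
theorem hc_S (T : ℤ → ℤ → ℤ → ℂ)
    (hTsym : ∀ k m n : ℤ, T k m n = T k n m)
    (hTcyc : ∀ k m n : ℤ, T k m n = T m n k)
    (a b : ℝ) (φ : ℝ → ℤ → ℂ) (w : ℤ → ℝ) (M D : ℝ) (hw : Summable w) (hw0 : ∀ k, 0 ≤ w k)
    (hw1 : ∀ k, w k ≤ 1) (hM : 0 ≤ M)
    (hA : ∀ t ∈ Set.Ioo a b, ∀ k m n : ℤ, k + m + n = 0 →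
      ‖T k m n * φ t m * φ t n‖ ≤ M * (w m * w n))
    (hD : ∀ t ∈ Set.Ioo a b, ∀ k, ‖φ t k‖ ≤ D)
    (heq : ∀ t ∈ Set.Ioo a b, ∀ k : ℤ,
      HasDerivAt (fun τ => φ τ k)
        (-(Complex.I * (Int.sign k : ℂ) *
          ∑' n : ℤ, T (-k) (k - n) n * φ t (k - n) * φ t n)) t) :
    (∀ t ∈ Set.Ioo a b, Summable fun p : ℤ × ℤ =>
      T (-(p.1+p.2)) p.1 p.2 * φ t (-(p.1+p.2)) * φ t p.1 * φ t p.2) ∧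
    ∀ t ∈ Set.Ioo a b, ∀ t' ∈ Set.Ioo a b,
    ∑' p : ℤ × ℤ, T (-(p.1+p.2)) p.1 p.2 * φ t (-(p.1+p.2)) * φ t p.1 * φ t p.2
    = ∑' p : ℤ × ℤ, T (-(p.1+p.2)) p.1 p.2 * φ t' (-(p.1+p.2)) * φ t' p.1 * φ t' p.2 := by
  have hww : Summable (fun p : ℤ × ℤ => w p.1 * w p.2) := hw.mul_of_nonneg hw hw0 hw0
  obtain ⟨v, hv⟩ : ∃ v : ℝ → ℤ → ℂ, ∀ t k, v t k = -(Complex.I * (Int.sign k : ℂ) *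
          ∑' n : ℤ, T (-k) (k - n) n * φ t (k - n) * φ t n) := ⟨_, fun _ _ => rfl⟩
  set K : ℝ := M * ∑' n, w n with hK
  have hK0 : 0 ≤ K := mul_nonneg hM (tsum_nonneg hw0)
  have hvK : ∀ t ∈ Set.Ioo a b, ∀ k, ‖v t k‖ ≤ K := by
    intro t ht k
    have h1 : ‖∑' n : ℤ, T (-k) (k - n) n * φ t (k - n) * φ t n‖ ≤ K := by
      rw [hK, ← tsum_mul_left]
      refine tsum_of_norm_bounded (hw.mul_left M).hasSum fun n => ?_
      refine (hA t ht (-k) (k-n) n (by ring)).trans ?_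
      exact mul_le_mul_of_nonneg_left (mul_le_of_le_one_left (hw0 n) (hw1 _)) hM
    have h2 : ‖((Int.sign k : ℤ) : ℂ)‖ ≤ 1 := by
      rcases Int.sign_trichotomy k with h | h | h <;> simp [h]
    rw [hv, norm_neg, norm_mul, norm_mul, Complex.norm_I, one_mul]
    calc _ ≤ 1 * K := mul_le_mul h2 h1 (norm_nonneg _) zero_le_one
      _ = K := one_mul K
  have hS : ∀ t ∈ Set.Ioo a b, Summable fun p : ℤ × ℤ =>
      T (-(p.1+p.2)) p.1 p.2 * φ t (-(p.1+p.2)) * φ t p.1 * φ t p.2 := by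
    intro t ht
    refine Summable.of_norm_bounded (hww.mul_left (D * M)) fun p => ?_
    have h1 := hA t ht (-(p.1+p.2)) p.1 p.2 (by ring)
    have h2 := hD t ht (-(p.1+p.2))
    calc _ = ‖φ t (-(p.1+p.2))‖ * ‖T (-(p.1+p.2)) p.1 p.2 * φ t p.1 * φ t p.2‖ := by
            rw [← norm_mul]; congr 1; ring
      _ ≤ D * (M * (w p.1 * w p.2)) :=
            mul_le_mul h2 h1 (norm_nonneg _) ((norm_nonneg _).trans h2)
      _ = _ := by ring
  refine ⟨hS, ?_⟩
  -- rotation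
  let r : ℤ × ℤ ≃ ℤ × ℤ :=
    { toFun := fun p => (p.2, -(p.1 + p.2))
      invFun := fun p => (-(p.1 + p.2), p.1)
      left_inv := fun p => by ext <;> simp
      right_inv := fun p => by ext <;> simp }
  have hrr : ∀ p, r (r p) = (-(p.1+p.2), p.1) := fun p => by ext <;> simp [r]
  let G : ℝ → ℤ × ℤ → ℂ := fun t p => T (-(p.1+p.2)) p.1 p.2 * v t (-(p.1+p.2)) * φ t p.1 * φ t p.2
  let g' : ℤ × ℤ → ℝ → ℂ := fun p t => G t p + G t (r p) + G t (r (r p))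
  let W : ℤ × ℤ → ℝ := fun p => K * M * (w p.1 * w p.2)
  have hW : Summable W := hww.mul_left (K * M)
  have hGW : ∀ t ∈ Set.Ioo a b, ∀ p, ‖G t p‖ ≤ W p := by
    intro t ht p
    have h1 := hA t ht (-(p.1+p.2)) p.1 p.2 (by ring)
    have h2 := hvK t ht (-(p.1+p.2))
    calc _ = ‖v t (-(p.1+p.2))‖ * ‖T (-(p.1+p.2)) p.1 p.2 * φ t p.1 * φ t p.2‖ := by
            rw [← norm_mul]; congr 1; simp only [G]; ring
      _ ≤ K * (M * (w p.1 * w p.2)) :=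
            mul_le_mul h2 h1 (norm_nonneg _) ((norm_nonneg _).trans h2)
      _ = _ := by simp only [W]; ring
  have hW1 : Summable (fun p => W (r p)) := (r.summable_iff).2 hW
  have hW2 : Summable (fun p => W (r (r p))) := (r.summable_iff).2 hW1
  have hder : ∀ t ∈ Set.Ioo a b, HasDerivAt (fun t => ∑' p : ℤ × ℤ,
      T (-(p.1+p.2)) p.1 p.2 * φ t (-(p.1+p.2)) * φ t p.1 * φ t p.2) (∑' p, g' p t) t := by
    intro t ht
    refine hasDerivAt_tsum_of_isPreconnected (𝕜 := ℝ) (g' := g')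
      (g := fun (p : ℤ × ℤ) t => T (-(p.1+p.2)) p.1 p.2 * φ t (-(p.1+p.2)) * φ t p.1 * φ t p.2)
      ((hW.add hW1).add hW2) isOpen_Ioo isPreconnected_Ioo ?_ ?_ ht (hS t ht) ht
    · intro p y hy
      have d : ∀ k, HasDerivAt (fun τ => φ τ k) (v y k) y := fun k => by
        rw [hv]; exact heq y hy k
      have := (((d (-(p.1+p.2))).const_mul (T (-(p.1+p.2)) p.1 p.2)).mul (d p.1)).mul (d p.2)
      refine this.congr_deriv ?_
      simp only [g', hrr]
      simp only [G, r, Equiv.coe_fn_mk]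
      have e1 : -(p.2 + -(p.1+p.2)) = p.1 := by ring
      have e2 : -(-(p.1+p.2) + p.1) = p.2 := by ring
      rw [e1, e2, ← hTcyc (-(p.1+p.2)) p.1 p.2, hTcyc p.2 (-(p.1+p.2)) p.1]
      simp only [Pi.mul_apply]
      ring
    · intro p y hy
      exact (norm_add₃_le).trans (add_le_add_three (hGW y hy _) (hGW y hy _) (hGW y hy _))
  have hz : ∀ t ∈ Set.Ioo a b, ∑' p, g' p t = 0 := by
    intro t ht
    have s0 : Summable (G t) := Summable.of_norm_bounded hW (hGW t ht)
    have s1 : Summable (fun p => G t (r p)) := (r.summable_iff).2 s0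
    have s2 : Summable (fun p => G t (r (r p))) := (r.summable_iff).2 s1
    have z0 : ∑' p, G t p = 0 :=
      hc_zero T hTsym hTcyc (φ t) (v t) w M K hw hw0 (hA t ht) (hv t) (hvK t ht)
    have z1 : ∑' p, G t (r p) = 0 := (r.tsum_eq (G t)).trans z0
    have z2 : ∑' p, G t (r (r p)) = 0 := (r.tsum_eq (fun p => G t (r p))).trans z1
    simp only [g']
    rw [(s0.add s1).tsum_add s2, s0.tsum_add s1, z0, z1, z2]; simp
  intro t ht t' ht'
  refine isOpen_Ioo.is_const_of_deriv_eq_zero (𝕜 := ℝ) (s := Set.Ioo a b) (f := fun t => ∑' p : ℤ × ℤ,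
      T (-(p.1+p.2)) p.1 p.2 * φ t (-(p.1+p.2)) * φ t p.1 * φ t p.2) isPreconnected_Ioo ?_ ?_ ht ht'
  · exact fun x hx => (hder x hx).differentiableAt.differentiableWithinAt
  · intro x hx
    rw [(hder x hx).deriv, hz x hx]; rfl

set_option maxHeartbeats 1000000 in
theorem hc_H (T : ℤ → ℤ → ℤ → ℂ)
    (hTreal : ∀ k m n : ℤ, T k m n = starRingEnd ℂ (T (-k) (-m) (-n)))
    (hTcyc : ∀ k m n : ℤ, T k m n = T m n k)
    (hT0 : ∀ k m n : ℤ, k * m * n = 0 → T k m n = 0)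
    (u : ℤ → ℂ) (hconj : ∀ k : ℤ, u (-k) = starRingEnd ℂ (u k))
    (hS : Summable fun p : ℤ × ℤ =>
      T (-(p.1+p.2)) p.1 p.2 * u (-(p.1+p.2)) * u p.1 * u p.2) :
    3 * (∑' p : ℕ × ℕ,
        (T (-(((p.1 : ℤ) + 1) + ((p.2 : ℤ) + 1))) ((p.1 : ℤ) + 1) ((p.2 : ℤ) + 1) *
            starRingEnd ℂ (u (((p.1 : ℤ) + 1) + ((p.2 : ℤ) + 1))) *
            u ((p.1 : ℤ) + 1) * u ((p.2 : ℤ) + 1) +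
          starRingEnd ℂ
              (T (-(((p.1 : ℤ) + 1) + ((p.2 : ℤ) + 1))) ((p.1 : ℤ) + 1) ((p.2 : ℤ) + 1)) *
            starRingEnd ℂ (u ((p.1 : ℤ) + 1)) * starRingEnd ℂ (u ((p.2 : ℤ) + 1)) *
            u (((p.1 : ℤ) + 1) + ((p.2 : ℤ) + 1)))) =
    ∑' p : ℤ × ℤ, T (-(p.1+p.2)) p.1 p.2 * u (-(p.1+p.2)) * u p.1 * u p.2 := by
  let r : ℤ × ℤ ≃ ℤ × ℤ :=
    { toFun := fun p => (p.2, -(p.1 + p.2))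
      invFun := fun p => (-(p.1 + p.2), p.1)
      left_inv := fun p => by ext <;> simp
      right_inv := fun p => by ext <;> simp }
  have hrr : ∀ p, r (r p) = (-(p.1+p.2), p.1) := fun p => by ext <;> simp [r]
  set F : ℤ × ℤ → ℂ := fun p => T (-(p.1+p.2)) p.1 p.2 * u (-(p.1+p.2)) * u p.1 * u p.2 with hF
  have hFr : ∀ p, F (r p) = F p := by
    intro p
    simp only [hF, r, Equiv.coe_fn_mk]
    have e1 : -(p.2 + -(p.1+p.2)) = p.1 := by ring
    rw [e1, ← hTcyc (-(p.1+p.2)) p.1 p.2]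
    ring
  let P : Set (ℤ × ℤ) := {p | 0 < p.1 * p.2}
  let G := P.indicator F
  have hG : Summable G := hS.indicator P
  have hG1 : Summable (fun p => G (r p)) := (r.summable_iff).2 hG
  have hG2 : Summable (fun p => G (r (r p))) := (r.summable_iff).2 hG1
  have hsplit : ∀ p, F p = G p + G (r p) + G (r (r p)) := by
    intro p
    simp only [G, Set.indicator_apply, hFr]
    simp only [P, Set.mem_setOf_eq, hrr]
    simp only [r, Equiv.coe_fn_mk]
    obtain ⟨m, n⟩ := p
    dsimp only
    by_cases h0 : -(m+n) * m * n = 0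
    · have : F (m, n) = 0 := by simp only [hF]; rw [hT0 _ _ _ h0]; simp
      simp [this]
    · have hm : m ≠ 0 := by rintro rfl; simp at h0
      have hn : n ≠ 0 := by rintro rfl; simp at h0
      have hk : m + n ≠ 0 := by intro h; simp [h] at h0
      rcases lt_or_gt_of_ne hm with hm | hm <;> rcases lt_or_gt_of_ne hn with hn | hn <;>
        rcases lt_or_gt_of_ne hk with hk | hk
      all_goals first | omega | skip
      · rw [if_pos (by nlinarith), if_neg (by nlinarith), if_neg (by nlinarith)]; simp
      · rw [if_neg (by nlinarith), if_pos (by nlinarith), if_neg (by nlinarith)]; simp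
      · rw [if_neg (by nlinarith), if_neg (by nlinarith), if_pos (by nlinarith)]; simp
      · rw [if_neg (by nlinarith), if_neg (by nlinarith), if_pos (by nlinarith)]; simp
      · rw [if_neg (by nlinarith), if_pos (by nlinarith), if_neg (by nlinarith)]; simp
      · rw [if_pos (by nlinarith), if_neg (by nlinarith), if_neg (by nlinarith)]; simp
  have h3 : ∑' p, F p = 3 * ∑' p, G p := by
    rw [tsum_congr hsplit, (hG.add hG1).tsum_add hG2, hG.tsum_add hG1]
    have z1 : ∑' p, G (r p) = ∑' p, G p := r.tsum_eq G
    have z2 : ∑' p, G (r (r p)) = ∑' p, G p := (r.tsum_eq (fun p => G (r p))).trans z1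
    rw [z1, z2]; ring
  rw [h3]
  congr 1
  let j : (ℕ × ℕ) ⊕ (ℕ × ℕ) → ℤ × ℤ := Sum.elim
    (fun p => ((p.1 : ℤ) + 1, (p.2 : ℤ) + 1)) (fun p => (-((p.1 : ℤ) + 1), -((p.2 : ℤ) + 1)))
  have hj : Function.Injective j := by
    rintro (⟨x, y⟩ | ⟨x, y⟩) (⟨x', y'⟩ | ⟨x', y'⟩) h <;> simp [j] at h ⊢ <;> omega
  have hsupp : Function.support G ⊆ Set.range j := by
    rintro ⟨m, n⟩ h
    have hp : 0 < m * n := by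
      by_contra hc
      exact h (Set.indicator_of_notMem (by simpa [P] using hc) _)
    rcases pos_and_pos_or_neg_and_neg_of_mul_pos hp with ⟨h1, h2⟩ | ⟨h1, h2⟩
    · refine ⟨Sum.inl ((m-1).toNat, (n-1).toNat), ?_⟩
      simp [j]; omega
    · refine ⟨Sum.inr ((-m-1).toNat, (-n-1).toNat), ?_⟩
      simp [j]; omega
  rw [← hj.tsum_eq hsupp]
  have hGj : Summable (fun x => G (j x)) := hG.comp_injective hj
  have q1 : Summable (fun x => G (j (Sum.inl x))) := hGj.comp_injective Sum.inl_injective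
  have q2 : Summable (fun x => G (j (Sum.inr x))) := hGj.comp_injective Sum.inr_injective
  have := (HasSum.sum (f := fun x => G (j x)) q1.hasSum q2.hasSum).tsum_eq
  rw [this, ← q1.tsum_add q2]
  refine tsum_congr fun p => ?_
  obtain ⟨x, y⟩ := p
  have m1 : j (Sum.inl (x, y)) ∈ P := by
    simp only [j, P, Sum.elim_inl, Set.mem_setOf_eq]; positivity
  have m2 : j (Sum.inr (x, y)) ∈ P := by
    simp only [j, P, Sum.elim_inr, Set.mem_setOf_eq, neg_mul_neg]; positivity
  simp only [G]
  rw [Set.indicator_of_mem m1, Set.indicator_of_mem m2]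
  simp only [j, Sum.elim_inl, Sum.elim_inr, hF]
  generalize (x : ℤ) + 1 = m
  generalize (y : ℤ) + 1 = n
  have e : -(-m + -n) = m + n := by ring
  rw [e, hTreal (m+n) (-m) (-n), neg_neg, neg_neg, hconj m, hconj n, hconj (m+n)]
  ring

theorem hc_bound (ν : ℝ) (hν : 3 / 2 ≤ ν) (T : ℤ → ℤ → ℤ → ℂ) (C : ℝ) (hC : 0 < C)
    (hTbound : ∀ k m n : ℤ, ‖T k m n‖ ≤
      C * (|(k : ℝ)| * |(m : ℝ)| * |(n : ℝ)|) ^ ((1 : ℝ) / 2) *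
        min (|(k : ℝ)| ^ (ν - 3 / 2)) (min (|(m : ℝ)| ^ (ν - 3 / 2)) (|(n : ℝ)| ^ (ν - 3 / 2))))
    (s : ℝ) (hs : ν + 1 / 2 < s) (D : ℝ) (u : ℤ → ℂ)
    (hu : ∀ k, ‖u k‖ ≤ D * |(k : ℝ)| ^ (-s)) (k m n : ℤ) (hkmn : k + m + n = 0) :
    ‖T k m n * u m * u n‖ ≤ (2 * C * D ^ 2) *
      (|(m : ℝ)| ^ (ν / 2 + 1 / 4 - s) * |(n : ℝ)| ^ (ν / 2 + 1 / 4 - s)) := by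
  have hz : u 0 = 0 := by
    have := hu 0
    rw [Int.cast_zero, abs_zero, Real.zero_rpow (by linarith), mul_zero] at this
    exact norm_le_zero_iff.1 this
  have hD : 0 ≤ D := by
    have := (norm_nonneg _).trans (hu 1)
    simpa using this
  by_cases hm : m = 0
  · subst hm; simp [hz]; positivity
  by_cases hn : n = 0
  · subst hn; simp [hz]; positivity
  have hx : (1 : ℝ) ≤ |(m : ℝ)| := by exact_mod_cast Int.one_le_abs hm
  have hy : (1 : ℝ) ≤ |(n : ℝ)| := by exact_mod_cast Int.one_le_abs hn
  have hk : |(k : ℝ)| ≤ 2 * (|(m : ℝ)| * |(n : ℝ)|) := by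
    have : (k : ℝ) = -((m : ℝ) + n) := by
      have : k = -(m + n) := by omega
      rw [this]; push_cast; ring
    rw [this, abs_neg]
    refine (abs_add_le _ _).trans ?_
    nlinarith
  have hum := hu m
  have hun := hu n
  have hT := hTbound k m n
  generalize |(m : ℝ)| = x at *
  generalize |(n : ℝ)| = y at *
  have hz0 : 0 ≤ |(k : ℝ)| := abs_nonneg _
  generalize |(k : ℝ)| = z at *
  have x0 : 0 < x := by linarith
  have y0 : 0 < y := by linarith
  have b1 : (z * x * y) ^ ((1 : ℝ) / 2) ≤ 2 * (x * y) := by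
    rw [← Real.sqrt_eq_rpow]
    refine Real.sqrt_le_iff.2 ⟨by positivity, ?_⟩
    have : 0 < x * y := by positivity
    nlinarith
  have b2 : min (z ^ (ν - 3 / 2)) (min (x ^ (ν - 3 / 2)) (y ^ (ν - 3 / 2)))
      ≤ x ^ ((ν - 3 / 2) / 2) * y ^ ((ν - 3 / 2) / 2) := by
    refine (min_le_right _ _).trans ?_
    rcases le_total x y with h | h
    · refine (min_le_left _ _).trans ?_
      calc x ^ (ν - 3 / 2) = x ^ ((ν - 3 / 2) / 2) * x ^ ((ν - 3 / 2) / 2) := by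
            rw [← Real.rpow_add x0]; ring_nf
        _ ≤ _ := by gcongr
    · refine (min_le_right _ _).trans ?_
      calc y ^ (ν - 3 / 2) = y ^ ((ν - 3 / 2) / 2) * y ^ ((ν - 3 / 2) / 2) := by
            rw [← Real.rpow_add y0]; ring_nf
        _ ≤ _ := by gcongr
  have hp : ∀ x : ℝ, 0 < x → x ^ (ν / 2 + 1 / 4 - s) = x * x ^ ((ν - 3 / 2) / 2) * x ^ (-s) := by
    intro x x0
    nth_rewrite 2 [← Real.rpow_one x]
    rw [← Real.rpow_add x0, ← Real.rpow_add x0]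
    ring_nf
  rw [norm_mul, norm_mul, hp x x0, hp y y0]
  calc ‖T k m n‖ * ‖u m‖ * ‖u n‖
      ≤ (C * (2 * (x * y)) * (x ^ ((ν - 3 / 2) / 2) * y ^ ((ν - 3 / 2) / 2))) *
        (D * x ^ (-s)) * (D * y ^ (-s)) := by
        have : ‖T k m n‖ ≤ C * (2 * (x * y)) * (x ^ ((ν - 3 / 2) / 2) * y ^ ((ν - 3 / 2) / 2)) := by
          refine hT.trans ?_
          gcongr
        gcongr
    _ = _ := by ring

/-- Conservation of the Hamiltonian `ℋ` for solutions of the spectral evolution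
equation; the sum runs over positive wavenumbers `m = p.1 + 1`, `n = p.2 + 1`. -/
theorem hamiltonian_conserved
    (ν : ℝ) (hν : 3 / 2 ≤ ν) (T : ℤ → ℤ → ℤ → ℂ)
    (hTreal : ∀ k m n : ℤ, T k m n = starRingEnd ℂ (T (-k) (-m) (-n)))
    (hTsym : ∀ k m n : ℤ, T k m n = T k n m)
    (hTcyc : ∀ k m n : ℤ, T k m n = T m n k)
    (hT0 : ∀ k m n : ℤ, k * m * n = 0 → T k m n = 0)
    (C : ℝ) (hC : 0 < C)
    (hTbound : ∀ k m n : ℤ, ‖T k m n‖ ≤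
      C * (|(k : ℝ)| * |(m : ℝ)| * |(n : ℝ)|) ^ ((1 : ℝ) / 2) *
        min (|(k : ℝ)| ^ (ν - 3 / 2)) (min (|(m : ℝ)| ^ (ν - 3 / 2)) (|(n : ℝ)| ^ (ν - 3 / 2))))
    (s : ℝ) (hs : ν + 1 / 2 < s)
    (a b : ℝ) (φ : ℝ → ℤ → ℂ)
    (hzero : ∀ t ∈ Set.Ioo a b, φ t 0 = 0)
    (hconj : ∀ t ∈ Set.Ioo a b, ∀ k : ℤ, φ t (-k) = starRingEnd ℂ (φ t k))
    (hsummable : ∀ t ∈ Set.Ioo a b,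
      Summable fun k : ℤ => |(k : ℝ)| ^ (2 * s) * ‖φ t k‖ ^ 2)
    (hbound : ∃ B : ℝ, ∀ t ∈ Set.Ioo a b,
      (∑' k : ℤ, |(k : ℝ)| ^ (2 * s) * ‖φ t k‖ ^ 2) ≤ B)
    (hcont : HsContOn s φ (Set.Ioo a b))
    (heq : ∀ t ∈ Set.Ioo a b, ∀ k : ℤ,
      HasDerivAt (fun τ => φ τ k)
        (-(Complex.I * (Int.sign k : ℂ) *
          ∑' n : ℤ, T (-k) (k - n) n * φ t (k - n) * φ t n)) t) :
    ∀ t ∈ Set.Ioo a b, ∀ t' ∈ Set.Ioo a b,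
      (∑' p : ℕ × ℕ,
        (T (-(((p.1 : ℤ) + 1) + ((p.2 : ℤ) + 1))) ((p.1 : ℤ) + 1) ((p.2 : ℤ) + 1) *
            starRingEnd ℂ (φ t (((p.1 : ℤ) + 1) + ((p.2 : ℤ) + 1))) *
            φ t ((p.1 : ℤ) + 1) * φ t ((p.2 : ℤ) + 1) +
          starRingEnd ℂ
              (T (-(((p.1 : ℤ) + 1) + ((p.2 : ℤ) + 1))) ((p.1 : ℤ) + 1) ((p.2 : ℤ) + 1)) *
            starRingEnd ℂ (φ t ((p.1 : ℤ) + 1)) * starRingEnd ℂ (φ t ((p.2 : ℤ) + 1)) *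
            φ t (((p.1 : ℤ) + 1) + ((p.2 : ℤ) + 1)))) =
      ∑' p : ℕ × ℕ,
        (T (-(((p.1 : ℤ) + 1) + ((p.2 : ℤ) + 1))) ((p.1 : ℤ) + 1) ((p.2 : ℤ) + 1) *
            starRingEnd ℂ (φ t' (((p.1 : ℤ) + 1) + ((p.2 : ℤ) + 1))) *
            φ t' ((p.1 : ℤ) + 1) * φ t' ((p.2 : ℤ) + 1) +
          starRingEnd ℂ
              (T (-(((p.1 : ℤ) + 1) + ((p.2 : ℤ) + 1))) ((p.1 : ℤ) + 1) ((p.2 : ℤ) + 1)) *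
            starRingEnd ℂ (φ t' ((p.1 : ℤ) + 1)) * starRingEnd ℂ (φ t' ((p.2 : ℤ) + 1)) *
            φ t' (((p.1 : ℤ) + 1) + ((p.2 : ℤ) + 1))) := by
  obtain ⟨B, hB⟩ := hbound
  set D : ℝ := Real.sqrt B with hDdef
  set q : ℝ := ν / 2 + 1 / 4 - s with hq
  have hq1 : q < -1 := by rw [hq]; linarith
  let w : ℤ → ℝ := fun k => |(k : ℝ)| ^ q
  have hu : ∀ t ∈ Set.Ioo a b, ∀ k : ℤ, ‖φ t k‖ ≤ D * |(k : ℝ)| ^ (-s) := by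
    intro t ht k
    by_cases hk : k = 0
    · subst hk
      rw [hzero t ht, norm_zero]; positivity
    have h1 : |(k : ℝ)| ^ (2 * s) * ‖φ t k‖ ^ 2 ≤ B :=
      ((hsummable t ht).le_tsum k (fun j _ => by positivity)).trans (hB t ht)
    have k0 : 0 < |(k : ℝ)| := abs_pos.2 (by exact_mod_cast hk)
    have h2 : |(k : ℝ)| ^ s * ‖φ t k‖ ≤ D := by
      refine Real.le_sqrt_of_sq_le ?_
      have : |(k : ℝ)| ^ (2 * s) = (|(k : ℝ)| ^ s) ^ 2 := by
        rw [mul_comm, Real.rpow_mul k0.le]; norm_cast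
      rw [mul_pow, ← this]; exact h1
    rw [Real.rpow_neg k0.le, ← div_eq_mul_inv, le_div_iff₀ (by positivity), mul_comm]
    exact h2
  have hle1 : ∀ e : ℝ, e < 0 → ∀ k : ℤ, |(k : ℝ)| ^ e ≤ 1 := by
    intro e he k
    by_cases hk : k = 0
    · subst hk; simp [Real.zero_rpow he.ne]
    · exact Real.rpow_le_one_of_one_le_of_nonpos
        (by exact_mod_cast Int.one_le_abs hk) he.le
  have hw : Summable w := by
    have := (Real.summable_abs_int_rpow (b := -q) (by linarith))
    simpa [w] using this
  obtain ⟨hS, hc⟩ := hc_S T hTsym hTcyc a b φ w (2 * C * D ^ 2) D hw (fun k => by positivity)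
    (hle1 q (by linarith)) (by positivity)
    (fun t ht k m n h => hc_bound ν hν T C hC hTbound s hs D (φ t) (hu t ht) k m n h)
    (fun t ht k => (hu t ht k).trans
      (mul_le_of_le_one_right (Real.sqrt_nonneg _) (hle1 (-s) (by linarith) k))) heq
  intro t ht t' ht'
  have e1 := hc_H T hTreal hTcyc hT0 (φ t) (hconj t ht) (hS t ht)
  have e2 := hc_H T hTreal hTcyc hT0 (φ t') (hconj t' ht') (hS t' ht')
  have e3 := hc t ht t' ht'
  exact mul_left_cancel₀ (three_ne_zero) (e1.trans (e3.trans e2.symm))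
end

section
/- Let 0 < r < 1 and α, β, γ ∈ ℝ, and define the Rayleigh-wave kernel T : ℤ³ → ℝ for kmn ≠ 0 by T(k,m,n) = α|kmn|/(|k| + r|m| + r|n|) + α|kmn|/(r|k| + |m| + r|n|) + α|kmn|/(r|k| + r|m| + |n|) + β|kmn|/(r|k| + |m| + |n|) + β|kmn|/(|k| + r|m| + |n|) + β|kmn|/(|k| + |m| + r|n|) + γ|kmn|/(|k| + |m| + |n|), and T(k,m,n) = 0 when kmn = 0. Then T satisfies the bound |T(k,m,n)| ≤ C |kmn|^{1/2} min{|k|^{1/2}, |m|^{1/2}, |n|^{1/2}} for all k, m, n ∈ ℤ, with C = (1/2)(3|α|/r + 3|β|/r + |γ|). -/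
lemma aux1 (a b c : ℝ) (ha : 0 < a) (hb : 0 < b) (hc : 0 < c) :
    2 * √(a * b * c) ≤ (a + b + c) * √c := by
  rw [Real.sqrt_mul (by positivity), Real.sqrt_mul ha.le]
  have h := sq_nonneg (√a - √b)
  have h1 := Real.sq_sqrt ha.le
  have h2 := Real.sq_sqrt hb.le
  have h3 : 2 * (√a * √b) ≤ a + b + c := by nlinarith
  nlinarith [mul_le_mul_of_nonneg_right h3 (Real.sqrt_nonneg c)]

lemma aux2 (a b c : ℝ) (ha : 0 < a) (hb : 0 < b) (hc : 0 < c) :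
    2 * (a * b * c) ≤ (a + b + c) * (√(a * b * c) * min (√a) (min (√b) (√c))) := by
  have h1 := aux1 a b c ha hb hc
  have h2 := aux1 a c b ha hc hb
  have h3 := aux1 b c a hb hc ha
  rw [show a * c * b = a * b * c by ring, show a + c + b = a + b + c by ring] at h2
  rw [show b * c * a = a * b * c by ring, show b + c + a = a + b + c by ring] at h3
  have h : 2 * √(a * b * c) ≤ (a + b + c) * min (√a) (min (√b) (√c)) := by
    rcases min_choice (√a) (min (√b) (√c)) with e | e <;> rw [e]
    · exact h3
    · rcases min_choice (√b) (√c) with e | e <;> rw [e]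
      · exact h2
      · exact h1
  have hs := Real.mul_self_sqrt (show 0 ≤ a * b * c by positivity)
  nlinarith [mul_le_mul_of_nonneg_left h (Real.sqrt_nonneg (a * b * c))]

lemma aux3 (x P D S M q : ℝ) (hP : 0 ≤ P) (hq : 0 < q) (hS : 0 < S) (hD : q * S ≤ D)
    (h : 2 * P ≤ S * M) : |x * P / D| ≤ |x| / q * (M / 2) := by
  have hqS : 0 < q * S := by positivity
  have hD0 : 0 < D := by linarith
  rw [abs_div, abs_mul, abs_of_nonneg hP, abs_of_pos hD0, mul_div_assoc, div_mul_eq_mul_div,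
    mul_div_assoc]
  refine mul_le_mul_of_nonneg_left ?_ (abs_nonneg x)
  refine (div_le_div_of_nonneg_left hP hqS hD).trans ?_
  rw [div_le_div_iff₀ hqS hq]
  nlinarith

/-- The Rayleigh-wave kernel satisfies the interaction-coefficient bound
`|T(k,m,n)| ≤ C |kmn|^{1/2} min{|k|^{1/2},|m|^{1/2},|n|^{1/2}}` with
`C = (1/2)(3|α|/r + 3|β|/r + |γ|)`. -/
theorem rayleigh_kernel_bound
    (r α β γ : ℝ) (hr0 : 0 < r) (hr1 : r < 1)
    (T : ℤ → ℤ → ℤ → ℝ)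
    (hT : ∀ k m n : ℤ, k * m * n ≠ 0 →
      T k m n =
        α * (|(k : ℝ)| * |(m : ℝ)| * |(n : ℝ)|) / (|(k : ℝ)| + r * |(m : ℝ)| + r * |(n : ℝ)|) +
        α * (|(k : ℝ)| * |(m : ℝ)| * |(n : ℝ)|) / (r * |(k : ℝ)| + |(m : ℝ)| + r * |(n : ℝ)|) +
        α * (|(k : ℝ)| * |(m : ℝ)| * |(n : ℝ)|) / (r * |(k : ℝ)| + r * |(m : ℝ)| + |(n : ℝ)|) +
        β * (|(k : ℝ)| * |(m : ℝ)| * |(n : ℝ)|) / (r * |(k : ℝ)| + |(m : ℝ)| + |(n : ℝ)|) +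
        β * (|(k : ℝ)| * |(m : ℝ)| * |(n : ℝ)|) / (|(k : ℝ)| + r * |(m : ℝ)| + |(n : ℝ)|) +
        β * (|(k : ℝ)| * |(m : ℝ)| * |(n : ℝ)|) / (|(k : ℝ)| + |(m : ℝ)| + r * |(n : ℝ)|) +
        γ * (|(k : ℝ)| * |(m : ℝ)| * |(n : ℝ)|) / (|(k : ℝ)| + |(m : ℝ)| + |(n : ℝ)|))
    (hT0 : ∀ k m n : ℤ, k * m * n = 0 → T k m n = 0) :
    ∀ k m n : ℤ,
      |T k m n| ≤ (1 / 2) * (3 * |α| / r + 3 * |β| / r + |γ|) *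
        ((|(k : ℝ)| * |(m : ℝ)| * |(n : ℝ)|) ^ ((1 : ℝ) / 2) *
          min (|(k : ℝ)| ^ ((1 : ℝ) / 2))
            (min (|(m : ℝ)| ^ ((1 : ℝ) / 2)) (|(n : ℝ)| ^ ((1 : ℝ) / 2)))) := by
  intro k m n
  by_cases h0 : k * m * n = 0
  · rw [hT0 k m n h0, abs_zero]
    positivity
  rw [hT k m n h0]
  simp only [← Real.sqrt_eq_rpow]
  have hk : k ≠ 0 := by rintro rfl; simp at h0
  have hm : m ≠ 0 := by rintro rfl; simp at h0
  have hn : n ≠ 0 := by rintro rfl; simp at h0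
  have ha : 0 < |(k : ℝ)| := abs_pos.2 (by exact_mod_cast hk)
  have hb : 0 < |(m : ℝ)| := abs_pos.2 (by exact_mod_cast hm)
  have hc : 0 < |(n : ℝ)| := abs_pos.2 (by exact_mod_cast hn)
  generalize |(k : ℝ)| = a at *
  generalize |(m : ℝ)| = b at *
  generalize |(n : ℝ)| = c at *
  have h := aux2 a b c ha hb hc
  have hP : 0 ≤ a * b * c := by positivity
  have hS : 0 < a + b + c := by positivity
  generalize √(a * b * c) * min (√a) (min (√b) (√c)) = M at *
  have ra : r * a ≤ a := by nlinarith
  have rb : r * b ≤ b := by nlinarith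
  have rc : r * c ≤ c := by nlinarith
  have key := fun x D hD => aux3 x (a * b * c) D (a + b + c) M r hP hr0 hS hD h
  have t1 := key α (a + r * b + r * c) (by linarith)
  have t2 := key α (r * a + b + r * c) (by linarith)
  have t3 := key α (r * a + r * b + c) (by linarith)
  have t4 := key β (r * a + b + c) (by linarith)
  have t5 := key β (a + r * b + c) (by linarith)
  have t6 := key β (a + b + r * c) (by linarith)
  have t7 := aux3 γ (a * b * c) (a + b + c) (a + b + c) M 1 hP one_pos hS (by linarith) h
  have e : 1 / 2 * (3 * |α| / r + 3 * |β| / r + |γ|) * M =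
      |α| / r * (M / 2) + |α| / r * (M / 2) + |α| / r * (M / 2) + |β| / r * (M / 2)
      + |β| / r * (M / 2) + |β| / r * (M / 2) + |γ| / 1 * (M / 2) := by ring
  rw [e]
  iterate 6 refine (abs_add_le _ _).trans (add_le_add ?_ (by assumption))
  exact t1
end

section
/- Define the Hunter–Saxton kernel S : ℤ³ → ℂ by S(k,m,n) = (1/2)(1/(ik) + 1/(im) + 1/(in)) for kmn ≠ 0 and S(k,m,n) = 0 otherwise. Let û : ℤ → ℂ satisfy û(0) = 0 and Σ_{k∈ℤ} |û(k)| < ∞. Then for every k ∈ ℤ with k ≠ 0, the absolutely convergent sums satisfy ik Σ_{n∈ℤ} S(−k, k−n, n) û(k−n) û(n) = ik Σ_{n∈ℤ, n≠0} û(k−n)·(û(n)/(in)) − (1/2) Σ_{n∈ℤ} û(k−n) û(n). In other words, the noncanonical evolution equation u_t + a(u,u)_x = 0 with this kernel coincides, in Fourier coefficients, with the derivative Hunter–Saxton equation u_t + (u ∂_x^{−1} u)_x − (1/2)(u² − ⟨u²⟩) = 0, where ∂_x^{−1} has Fourier symbol 1/(in) on zero-mean functions and ⟨·⟩ denotes the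 spatial mean. -/
open scoped BigOperators

set_option maxHeartbeats 1000000 in
/-- The noncanonical equation for the Hunter–Saxton kernel
`S(k,m,n) = (1/2)(1/(ik) + 1/(im) + 1/(in))` coincides, in Fourier coefficients,
with the derivative Hunter–Saxton equation
`u_t + (u ∂_x^{−1} u)_x − (1/2)(u² − ⟨u²⟩) = 0`. -/
theorem hunter_saxton_spectral_form
    (S : ℤ → ℤ → ℤ → ℂ)
    (hS : ∀ k m n : ℤ, k * m * n ≠ 0 →
      S k m n = (1 / 2) * (1 / (Complex.I * (k : ℂ)) + 1 / (Complex.I * (m : ℂ)) +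
        1 / (Complex.I * (n : ℂ))))
    (hS0 : ∀ k m n : ℤ, k * m * n = 0 → S k m n = 0)
    (u : ℤ → ℂ) (hu0 : u 0 = 0) (hu1 : Summable fun k : ℤ => ‖u k‖) :
    ∀ k : ℤ, k ≠ 0 →
      Complex.I * (k : ℂ) * ∑' n : ℤ, S (-k) (k - n) n * u (k - n) * u n =
        Complex.I * (k : ℂ) *
            (∑' n : {n : ℤ // n ≠ 0}, u (k - (n : ℤ)) * (u (n : ℤ) / (Complex.I * ((n : ℤ) : ℂ)))) -
          (1 / 2) * ∑' n : ℤ, u (k - n) * u n := by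
  intro k hk
  have hkC : (k : ℂ) ≠ 0 := by exact_mod_cast hk
  set p : ℤ → ℂ := fun n => u (k - n) * u n with hp
  set g : ℤ → ℂ := fun n => u (k - n) * (u n / (Complex.I * (n : ℂ))) with hg
  have hsp : Summable fun n => ‖p n‖ := by
    refine Summable.of_nonneg_of_le (fun n => norm_nonneg _) (fun n => ?_)
      (hu1.mul_left (∑' j, ‖u j‖))
    rw [hp, norm_mul]
    exact mul_le_mul_of_nonneg_right
      (hu1.le_tsum (k - n) (fun j _ => norm_nonneg _)) (norm_nonneg _)
  have hsg : Summable g := by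
    refine Summable.of_norm_bounded hsp (fun n => ?_)
    simp only [hp, hg, norm_mul, norm_div, Complex.norm_I, one_mul]
    refine mul_le_mul_of_nonneg_left ?_ (norm_nonneg _)
    by_cases hn : n = 0
    · simp [hn]
    · refine div_le_self (norm_nonneg _) ?_
      rw [Complex.norm_intCast]
      exact_mod_cast Int.one_le_abs hn
  have hsp' : Summable p := hsp.of_norm
  have hsg' : Summable fun n => g (k - n) := (Equiv.subLeft k).summable_iff.mpr hsg
  have hgg : ∑' n, g (k - n) = ∑' n, g n := (Equiv.subLeft k).tsum_eq g
  have hsub : ∑' n : {n : ℤ // n ≠ 0}, g n = ∑' n, g n := by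
    refine tsum_subtype_eq_of_support_subset (s := {n : ℤ | n ≠ 0}) (fun n hn h0 => ?_)
    apply hn
    simp [hg, h0]
  have hterm : ∀ n, S (-k) (k - n) n * u (k - n) * u n =
      (-(1 / (2 * (Complex.I * k)))) * p n + ((1 / 2) * g n + (1 / 2) * g (k - n)) := by
    intro n
    by_cases hn : n = 0
    · simp [hn, hp, hg, hu0]
    by_cases hm : k - n = 0
    · simp [hm, hp, hg, hu0]
    have hnC : (n : ℂ) ≠ 0 := by exact_mod_cast hn
    have hmC : (k : ℂ) - n ≠ 0 := by exact_mod_cast hm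
    rw [hS _ _ _ (mul_ne_zero (mul_ne_zero (neg_ne_zero.mpr hk) hm) hn)]
    simp only [hp, hg, sub_sub_cancel]
    push_cast
    have hI := Complex.I_ne_zero
    field_simp
    ring
  have h1 : ∑' n : ℤ, S (-k) (k - n) n * u (k - n) * u n =
      (-(1 / (2 * (Complex.I * k)))) * ∑' n, p n + ∑' n, g n := by
    rw [tsum_congr hterm, Summable.tsum_add (hsp'.mul_left _)
      ((hsg.mul_left _).add (hsg'.mul_left _)),
      Summable.tsum_add (hsg.mul_left _) (hsg'.mul_left _), tsum_mul_left, tsum_mul_left,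
      tsum_mul_left, hgg]
    ring
  rw [h1, hsub]
  have hI := Complex.I_ne_zero
  field_simp
  ring
end
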